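/- arXiv:2208.09534 — 3 statements merged into one kernel-verified Lean document; each statement's English description precedes it below -/
import Mathlib

section
/- If g is the characteristic function of a random variable ξ whose density is bounded by M, then for every integer m ≥ 1, (1/2π) ∫_{-∞}^{∞} |g(t)|^{2m} dt ≤ M/√m. -/
open MeasureTheory ProbabilityTheory

lemma quantile_exists (μ : Measure ℝ) [IsFiniteMeasure μ] [NullSingletonClass μ] :
    ∃ a : ℝ → ℝ, Measurable a ∧
      (∀ t ∈ Set.Ioo 0 (μ.real Set.univ), μ.real (Set.Iic (a t)) = t ∧
        ∀ x, t ≤ μ.real (Set.Iic x) → a t ≤ x) ∧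
      Measure.map a (volume.restrict (Set.Ioo 0 (μ.real Set.univ))) = μ := by
  set Φ : ℝ → ℝ := fun x => μ.real (Set.Iic x) with hΦ
  have hcont : Continuous Φ := by
    have h1 : Φ = fun x => Φ 0 + ∫ _ in (0:ℝ)..x, (1:ℝ) ∂μ := by
      funext x
      have h := intervalIntegral.integral_Iic_sub_Iic (μ := μ) (f := fun _ : ℝ => (1:ℝ)) (a := 0)
        (b := x) (integrable_const _).integrableOn (integrable_const _).integrableOn
      rw [← h]
      simp [hΦ, Measure.real]
    rw [h1]
    refine continuous_const.add (intervalIntegral.continuous_primitive (fun a b => ?_) 0)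
    exact (integrable_const _).intervalIntegrable
  have hmono : Monotone Φ := fun x y hxy => measureReal_mono (Set.Iic_subset_Iic.2 hxy)
  have htop : Filter.Tendsto Φ Filter.atTop (nhds (μ.real Set.univ)) := by
    have := tendsto_measure_Iic_atTop μ
    exact (ENNReal.tendsto_toReal (measure_ne_top μ _)).comp this
  have hbot : Filter.Tendsto Φ Filter.atBot (nhds 0) := by
    have := tendsto_measure_iInter_atBot (μ := μ) (s := fun x : ℝ => Set.Iic x)
      (fun x => measurableSet_Iic.nullMeasurableSet) (fun x y hxy => Set.Iic_subset_Iic.2 hxy)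
      ⟨0, measure_ne_top μ _⟩
    have h0 : (⋂ x : ℝ, Set.Iic x) = ∅ := by
      ext y
      simp only [Set.mem_iInter, Set.mem_Iic, Set.mem_empty_iff_false, iff_false, not_forall]
      exact ⟨y - 1, by linarith⟩
    rw [h0, measure_empty] at this
    exact (ENNReal.tendsto_toReal (ENNReal.zero_ne_top)).comp this
  have hex : ∀ t ∈ Set.Ioo 0 (μ.real Set.univ), ∃ a, Φ a = t ∧ ∀ x, t ≤ Φ x → a ≤ x := by
    intro t ht
    obtain ⟨x0, hx0⟩ := (hbot.eventually (gt_mem_nhds ht.1)).exists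
    obtain ⟨x1, hx1⟩ := (htop.eventually (lt_mem_nhds ht.2)).exists
    have hne : ({x | t ≤ Φ x}).Nonempty := ⟨x1, hx1.le⟩
    have hbdd : BddBelow {x | t ≤ Φ x} := ⟨x0, fun x hx => by
      by_contra hlt
      push Not at hlt
      exact absurd (hmono hlt.le) (not_le.2 (lt_of_lt_of_le hx0 hx))⟩
    have hcl : IsClosed {x | t ≤ Φ x} := isClosed_le continuous_const hcont
    have hmem := hcl.csInf_mem hne hbdd
    refine ⟨sInf {x | t ≤ Φ x}, le_antisymm ?_ hmem, fun x hx => csInf_le hbdd hx⟩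
    by_contra hlt
    push Not at hlt
    have : ∀ᶠ y in nhds (sInf {x | t ≤ Φ x}), t < Φ y :=
      hcont.continuousAt.eventually (lt_mem_nhds hlt)
    obtain ⟨l, hl, hl2⟩ := (this.filter_mono nhdsWithin_le_nhds |>.and
      (self_mem_nhdsWithin : Set.Iio (sInf {x | t ≤ Φ x}) ∈ nhdsWithin _ (Set.Iio _))).exists
    exact absurd (csInf_le hbdd (show l ∈ {x | t ≤ Φ x} from hl.le)) (not_le.2 hl2)
  classical
  choose! a ha using hex
  let a' : ℝ → ℝ := (Set.Ioo 0 (μ.real Set.univ)).indicator a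
  have ha' : ∀ t ∈ Set.Ioo 0 (μ.real Set.univ), a' t = a t := fun t ht =>
    Set.indicator_of_mem ht a
  have hiff : ∀ t ∈ Set.Ioo 0 (μ.real Set.univ), ∀ x, a' t ≤ x ↔ t ≤ Φ x := by
    intro t ht x
    rw [ha' t ht]
    refine ⟨fun h => ?_, fun h => (ha t ht).2 x h⟩
    rw [← (ha t ht).1]; exact hmono h
  have hmeas : Measurable a' := by
    refine measurable_of_Iic fun x => ?_
    have : a' ⁻¹' Set.Iic x = (Set.Ioo 0 (μ.real Set.univ) ∩ Set.Iic (Φ x)) ∪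
        ((Set.Ioo 0 (μ.real Set.univ))ᶜ ∩ {_t | 0 ≤ x}) := by
      ext t
      by_cases ht : t ∈ Set.Ioo 0 (μ.real Set.univ)
      · have := hiff t ht x
        simp only [Set.mem_preimage, Set.mem_Iic, Set.mem_union, Set.mem_inter_iff, ht,
          Set.mem_compl_iff, true_and, not_true, false_and, or_false, this]
      · have : a' t = 0 := Set.indicator_of_notMem ht a
        simp only [Set.mem_preimage, Set.mem_Iic, Set.mem_union, Set.mem_inter_iff, ht, this,
          Set.mem_compl_iff, false_and, not_false_eq_true, true_and, false_or, Set.mem_ofPred_eq]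
    rw [this]
    exact (measurableSet_Ioo.inter measurableSet_Iic).union
      (measurableSet_Ioo.compl.inter (MeasurableSet.const _))
  refine ⟨a', hmeas, fun t ht => ?_, ?_⟩
  · rw [ha' t ht]; exact ha t ht
  · refine Measure.ext_of_Iic _ _ fun x => ?_
    rw [Measure.map_apply hmeas measurableSet_Iic, Measure.restrict_apply (hmeas measurableSet_Iic)]
    have h1 : a' ⁻¹' Set.Iic x ∩ Set.Ioo 0 (μ.real Set.univ) =
        Set.Iic (Φ x) ∩ Set.Ioo 0 (μ.real Set.univ) := by
      ext t
      simp only [Set.mem_inter_iff, Set.mem_preimage, Set.mem_Iic]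
      constructor
      · rintro ⟨h, h'⟩; exact ⟨(hiff t h' x).1 h, h'⟩
      · rintro ⟨h, h'⟩; exact ⟨(hiff t h' x).2 h, h'⟩
    have hle : Φ x ≤ μ.real Set.univ := measureReal_mono (Set.subset_univ _)
    rw [h1]
    have h2 : volume (Set.Iic (Φ x) ∩ Set.Ioo 0 (μ.real Set.univ)) = volume (Set.Ioc 0 (Φ x)) := by
      refine measure_congr ?_
      have hne : ∀ᵐ t : ℝ, t ≠ μ.real Set.univ := by simp [ae_iff]
      filter_upwards [hne] with t ht
      refine propext ?_
      change (t ≤ Φ x ∧ 0 < t ∧ t < μ.real Set.univ) ↔ (0 < t ∧ t ≤ Φ x)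
      constructor
      · rintro ⟨h, h', _⟩; exact ⟨h', h⟩
      · rintro ⟨h, h'⟩; exact ⟨h', h, lt_of_le_of_ne (h'.trans hle) ht⟩
    rw [h2, Real.volume_Ioc, sub_zero]
    simp [hΦ]

def Conc (K : ℝ → ℝ) (ν : Measure ℝ) : Prop :=
  ∀ φ : ℝ → ENNReal, Measurable φ → (∀ x, φ x ≤ 1) → ∀ s : ℝ, 0 ≤ s →
    ∫⁻ x, φ x = ENNReal.ofReal s → ∫⁻ x, φ x ∂ν ≤ ENNReal.ofReal (K s)

/-- mass of the tail -/
lemma tail_mass (ψ : ℝ → ENNReal) (hψ : Measurable ψ) (s : ℝ)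
    (a : ℝ → ℝ) (ha : Measurable a) (Ψ : ℝ → ℝ) (hΨ : Measurable Ψ)
    (h1 : ∀ t ∈ Set.Ioo 0 s, Ψ (a t) = t)
    (h2 : Measure.map a (volume.restrict (Set.Ioo 0 s)) = volume.withDensity ψ)
    (S : Set ℝ) (hS : MeasurableSet S) (t : ℝ) (ht : t ∈ Set.Ioo 0 s)
    (hS1 : Set.Ioi t ⊆ S) (hS2 : S ⊆ Set.Ici t) :
    ∫⁻ x, ψ x * S.indicator 1 (Ψ x) = ENNReal.ofReal (s - t) := by
  have hm : Measurable fun x => S.indicator (1 : ℝ → ENNReal) (Ψ x) :=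
    (measurable_one.indicator hS).comp hΨ
  have e1 := lintegral_withDensity_eq_lintegral_mul volume hψ hm
  simp only [Pi.mul_apply] at e1
  rw [← e1, ← h2, lintegral_map hm ha]
  have e2 : ∫⁻ r in Set.Ioo 0 s, S.indicator (1 : ℝ → ENNReal) (Ψ (a r)) =
      ∫⁻ r in Set.Ioo 0 s, S.indicator (1 : ℝ → ENNReal) r :=
    setLIntegral_congr_fun measurableSet_Ioo fun r hr => by simp only [h1 r hr]
  rw [e2, lintegral_indicator_one hS, Measure.restrict_apply hS, ← sub_zero (s - t)]
  have : volume (S ∩ Set.Ioo 0 s) = volume (Set.Ioo t s) := by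
    refine measure_congr ?_
    have hne : ∀ᵐ r : ℝ, r ≠ t := by simp [ae_iff]
    filter_upwards [hne] with r hr
    refine propext ?_
    change (r ∈ S ∧ 0 < r ∧ r < s) ↔ (t < r ∧ r < s)
    constructor
    · rintro ⟨h, _, h'⟩; exact ⟨lt_of_le_of_ne (hS2 h) hr.symm, h'⟩
    · rintro ⟨h, h'⟩; exact ⟨hS1 h, ht.1.trans h, h'⟩
  rw [this, Real.volume_Ioo, sub_zero]

lemma meas_ind_Ioi {α : Type*} [MeasurableSpace α] (g h : α → ℝ) (hg : Measurable g)
    (hh : Measurable h) :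
    Measurable fun p : α => (Set.Ioi (g p)).indicator (1 : ℝ → ENNReal) (h p) := by
  have : (fun p : α => (Set.Ioi (g p)).indicator (1 : ℝ → ENNReal) (h p)) =
    {p | g p < h p}.indicator 1 := by
    funext p; simp [Set.indicator_apply]
  rw [this]
  exact measurable_one.indicator (measurableSet_lt hg hh)

lemma meas_ind_Ici {α : Type*} [MeasurableSpace α] (g h : α → ℝ) (hg : Measurable g)
    (hh : Measurable h) :
    Measurable fun p : α => (Set.Ici (g p)).indicator (1 : ℝ → ENNReal) (h p) := by
  have : (fun p : α => (Set.Ici (g p)).indicator (1 : ℝ → ENNReal) (h p)) =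
    {p | g p ≤ h p}.indicator 1 := by
    funext p; simp [Set.indicator_apply]
  rw [this]
  exact measurable_one.indicator (measurableSet_le hg hh)

set_option maxHeartbeats 1000000 in
lemma rearr_step (K : ℝ → ℝ) (ν : Measure ℝ) [SFinite ν] (hK : Conc K ν)
    (f : ℝ → ENNReal) (hf : Measurable f) (hf1 : ∀ x, f x ≤ 1) (hfi : ∫⁻ x, f x = 1)
    (φ : ℝ → ENNReal) (hφ : Measurable φ) (hφ1 : ∀ x, φ x ≤ 1) (s : ℝ) (hs : 0 ≤ s)
    (hφi : ∫⁻ x, φ x = ENNReal.ofReal s) :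
    ∫⁻ z, (∫⁻ y, φ (z + y) * f y) ∂ν ≤
      ∫⁻ t in Set.Ioo 0 (min s 1), ENNReal.ofReal (K (s + 1 - 2 * t)) := by
  classical
  set μφ : Measure ℝ := volume.withDensity φ with hμφ
  set μf : Measure ℝ := volume.withDensity f with hμf
  have hφu : μφ Set.univ = ENNReal.ofReal s := by
    rw [hμφ, withDensity_apply _ MeasurableSet.univ, Measure.restrict_univ, hφi]
  have hfu : μf Set.univ = 1 := by
    rw [hμf, withDensity_apply _ MeasurableSet.univ, Measure.restrict_univ, hfi]
  have : IsFiniteMeasure μφ := ⟨by rw [hφu]; exact ENNReal.ofReal_lt_top⟩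
  have : IsFiniteMeasure μf := ⟨by rw [hfu]; exact ENNReal.one_lt_top⟩
  have hφr : μφ.real Set.univ = s := by rw [Measure.real, hφu, ENNReal.toReal_ofReal hs]
  have hfr : μf.real Set.univ = 1 := by rw [Measure.real, hfu, ENNReal.toReal_one]
  obtain ⟨a, ham, ha, hamap⟩ := quantile_exists μφ
  obtain ⟨b, hbm, hb, hbmap⟩ := quantile_exists μf
  rw [hφr] at ha hamap
  rw [hfr] at hb hbmap
  set Φ : ℝ → ℝ := fun x => μφ.real (Set.Iic x) with hΦ
  set F : ℝ → ℝ := fun x => μf.real (Set.Iic x) with hF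
  have hΦmono : Monotone Φ := fun x y hxy => measureReal_mono (Set.Iic_subset_Iic.2 hxy)
  have hFmono : Monotone F := fun x y hxy => measureReal_mono (Set.Iic_subset_Iic.2 hxy)
  have hΦm : Measurable Φ := hΦmono.measurable
  have hFm : Measurable F := hFmono.measurable
  have hΦle : ∀ x, Φ x ≤ s := fun x => hφr ▸ measureReal_mono (Set.subset_univ _)
  have hFle : ∀ x, F x ≤ 1 := fun x => hfr ▸ measureReal_mono (Set.subset_univ _)
  have ha : ∀ t ∈ Set.Ioo 0 s, Φ (a t) = t ∧ ∀ x, t ≤ Φ x → a t ≤ x := ha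
  have hb : ∀ t ∈ Set.Ioo 0 (1 : ℝ), F (b t) = t ∧ ∀ x, t ≤ F x → b t ≤ x := hb
  clear_value Φ F
  -- the two pieces
  let ρ1 : ℝ → ℝ → ENNReal := fun t z => f (a t - z) * (Set.Ioi t).indicator 1 (F (a t - z))
  let ρ2 : ℝ → ℝ → ENNReal := fun t z => φ (z + b t) * (Set.Ici t).indicator 1 (Φ (z + b t))
  have hρ1 : Measurable (Function.uncurry ρ1) := by
    refine (hf.comp (by fun_prop)).mul (meas_ind_Ioi _ (fun p => F (a p.1 - p.2)) measurable_fst ?_)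
    exact hFm.comp (by fun_prop)
  have hρ2 : Measurable (Function.uncurry ρ2) := by
    refine (hφ.comp (by fun_prop)).mul (meas_ind_Ici _ (fun p => Φ (p.2 + b p.1)) measurable_fst ?_)
    exact hΦm.comp (by fun_prop)
  have key : ∀ z, ∫⁻ y, φ (z + y) * f y ≤ ∫⁻ t in Set.Ioo 0 (min s 1), (ρ1 t z + ρ2 t z) := by
    intro z
    have m1 : Measurable fun x => f (x - z) * (Set.Ioi (Φ x)).indicator 1 (F (x - z)) := by
      refine (hf.comp (by fun_prop)).mul ?_
      exact meas_ind_Ioi Φ (fun x => F (x - z)) hΦm (hFm.comp (by fun_prop))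
    have m2 : Measurable fun y => φ (z + y) * (Set.Ici (F y)).indicator 1 (Φ (z + y)) := by
      refine (hφ.comp (by fun_prop)).mul ?_
      exact meas_ind_Ici F (fun x => Φ (z + x)) hFm (hΦm.comp (by fun_prop))
    have split : ∀ y, φ (z + y) * f y =
        φ (z + y) * (f (z + y - z) * (Set.Ioi (Φ (z + y))).indicator 1 (F (z + y - z))) +
        f y * (φ (z + y) * (Set.Ici (F y)).indicator 1 (Φ (z + y))) := by
      intro y
      rw [add_sub_cancel_left]
      by_cases h : Φ (z + y) < F y
      · rw [Set.indicator_of_mem (show F y ∈ Set.Ioi (Φ (z + y)) from h),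
          Set.indicator_of_notMem (show Φ (z + y) ∉ Set.Ici (F y) from not_le.2 h)]
        simp
      · rw [Set.indicator_of_notMem (show F y ∉ Set.Ioi (Φ (z + y)) from h),
          Set.indicator_of_mem (show Φ (z + y) ∈ Set.Ici (F y) from not_lt.1 h)]
        simp [mul_comm]
    have e0 : ∫⁻ y, φ (z + y) * f y =
        (∫⁻ x, φ x * (f (x - z) * (Set.Ioi (Φ x)).indicator 1 (F (x - z)))) +
        ∫⁻ y, f y * (φ (z + y) * (Set.Ici (F y)).indicator 1 (Φ (z + y))) := by
      rw [lintegral_congr split]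
      refine (lintegral_add_right _ (hf.mul m2)).trans ?_
      congr 1
      exact lintegral_add_left_eq_self (μ := volume)
        (fun x => φ x * (f (x - z) * (Set.Ioi (Φ x)).indicator 1 (F (x - z)))) z
    have e1 := lintegral_withDensity_eq_lintegral_mul volume hφ m1
    have e2 := lintegral_withDensity_eq_lintegral_mul volume hf m2
    simp only [Pi.mul_apply] at e1 e2
    rw [e0, ← e1, ← e2, ← hμφ, ← hμf]
    rw [← hamap, ← hbmap, lintegral_map m1 ham, lintegral_map m2 hbm]
    have hmeas1 : Measurable fun t => ρ1 t z := hρ1.comp (measurable_id.prodMk measurable_const)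
    rw [lintegral_add_left hmeas1]
    refine add_le_add ?_ ?_
    · rw [← lintegral_indicator measurableSet_Ioo, ← lintegral_indicator measurableSet_Ioo]
      refine lintegral_mono fun t => ?_
      by_cases ht : t ∈ Set.Ioo 0 s
      · rw [Set.indicator_of_mem ht]
        have hat : Φ (a t) = t := (ha t ht).1
        rw [hat]
        by_cases ht2 : t < F (a t - z)
        · have : t ∈ Set.Ioo 0 (min s 1) := ⟨ht.1, lt_min ht.2 (ht2.trans_le (hFle _))⟩
          rw [Set.indicator_of_mem this]
        · rw [Set.indicator_of_notMem (show F (a t - z) ∉ Set.Ioi t from ht2)]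
          simp
      · rw [Set.indicator_of_notMem ht]; exact zero_le
    · rw [← lintegral_indicator measurableSet_Ioo, ← lintegral_indicator measurableSet_Ioo]
      have hne : ∀ᵐ t : ℝ, t ≠ s := by simp [ae_iff]
      refine lintegral_mono_ae ?_
      filter_upwards [hne] with t hts
      by_cases ht : t ∈ Set.Ioo 0 (1 : ℝ)
      · rw [Set.indicator_of_mem ht]
        have hat : F (b t) = t := (hb t ht).1
        rw [hat]
        by_cases ht2 : t ≤ Φ (z + b t)
        · have : t ∈ Set.Ioo 0 (min s 1) :=
            ⟨ht.1, lt_min (lt_of_le_of_ne (ht2.trans (hΦle _)) hts) ht.2⟩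
          rw [Set.indicator_of_mem this]
        · rw [Set.indicator_of_notMem (show Φ (z + b t) ∉ Set.Ici t from ht2)]
          simp
      · rw [Set.indicator_of_notMem ht]; exact zero_le
  have hρ : Measurable (Function.uncurry fun z t => ρ1 t z + ρ2 t z) :=
    (hρ1.comp measurable_swap).add (hρ2.comp measurable_swap)
  calc ∫⁻ z, (∫⁻ y, φ (z + y) * f y) ∂ν
      ≤ ∫⁻ z, (∫⁻ t in Set.Ioo 0 (min s 1), (ρ1 t z + ρ2 t z)) ∂ν := lintegral_mono key
    _ = ∫⁻ t in Set.Ioo 0 (min s 1), ∫⁻ z, (ρ1 t z + ρ2 t z) ∂ν :=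
        lintegral_lintegral_swap hρ.aemeasurable
    _ ≤ _ := by
        refine setLIntegral_mono' measurableSet_Ioo fun t ht => ?_
        have hts : t ∈ Set.Ioo 0 s := ⟨ht.1, ht.2.trans_le (min_le_left _ _)⟩
        have ht1 : t ∈ Set.Ioo 0 (1:ℝ) := ⟨ht.1, ht.2.trans_le (min_le_right _ _)⟩
        have r1m : Measurable (ρ1 t) := hρ1.comp (measurable_const.prodMk measurable_id)
        have r2m : Measurable (ρ2 t) := hρ2.comp (measurable_const.prodMk measurable_id)
        refine hK _ (r1m.add r2m) ?_ _ (by linarith [hts.2, ht1.2]) ?_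
        · intro z
          have hi : ∀ (S : Set ℝ) (x : ℝ), S.indicator (1 : ℝ → ENNReal) x ≤ 1 := fun S x => by
            by_cases h : x ∈ S <;> simp [h]
          by_cases h : t < F (a t - z)
          · have h2 : ¬ t ≤ Φ (z + b t) := by
              intro h3
              have h4 := (ha t hts).2 _ h3
              have h5 : a t - z ≤ b t := by linarith
              have h6 : F (a t - z) ≤ F (b t) := hFmono h5
              rw [show F (b t) = t from (hb t ht1).1] at h6
              exact absurd h (not_lt.2 h6)
            have : ρ2 t z = 0 := by
              simp only [ρ2]
              rw [Set.indicator_of_notMem (show Φ (z + b t) ∉ Set.Ici t from h2), mul_zero]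
            simp only [Pi.add_apply, this, add_zero]
            exact mul_le_one' (hf1 _) (hi _ _)
          · have : ρ1 t z = 0 := by
              simp only [ρ1]
              rw [Set.indicator_of_notMem (show F (a t - z) ∉ Set.Ioi t from h), mul_zero]
            simp only [Pi.add_apply, this, zero_add]
            exact mul_le_one' (hφ1 _) (hi _ _)
        · simp only [Pi.add_apply]
          rw [lintegral_add_left r1m]
          have i1 : ∫⁻ z, ρ1 t z = ENNReal.ofReal (1 - t) := by
            rw [← tail_mass f hf 1 b hbm F hFm (fun t ht => (hb t ht).1) hbmap (Set.Ioi t)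
              measurableSet_Ioi t ht1 le_rfl Set.Ioi_subset_Ici_self]
            exact lintegral_sub_left_eq_self (μ := volume)
              (fun x => f x * (Set.Ioi t).indicator 1 (F x)) (a t)
          have i2 : ∫⁻ z, ρ2 t z = ENNReal.ofReal (s - t) := by
            rw [← tail_mass φ hφ s a ham Φ hΦm (fun t ht => (ha t ht).1) hamap (Set.Ici t)
              measurableSet_Ici t hts Set.Ioi_subset_Ici_self le_rfl]
            exact lintegral_add_right_eq_self (μ := volume)
              (fun x => φ x * (Set.Ici t).indicator 1 (Φ x)) (b t)
          rw [i1, i2, ← ENNReal.ofReal_add (by linarith [ht1.2]) (by linarith [hts.2])]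
          congr 1; ring

lemma my_mul_sinc (x : ℝ) : x * Real.sinc x = Real.sin x := by
  by_cases h : x = 0
  · simp [h]
  · rw [Real.sinc_of_ne_zero h]; field_simp

lemma my_abs_pow_sinc_le (t : ℝ) (n : ℕ) : |Real.sinc t ^ n| ≤ 1 := by
  rw [abs_pow]; exact pow_le_one₀ (abs_nonneg _) (Real.abs_sinc_le_one t)

lemma kern_bound (s t : ℝ) (n : ℕ) (hn : 1 ≤ n) :
    |s * Real.sinc (s * t) * Real.sinc t ^ n| ≤ (|s| + 1) * (1 + t ^ 2)⁻¹ := by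
  have hpos : 0 < 1 + t ^ 2 := by positivity
  rw [← div_eq_mul_inv, le_div_iff₀ hpos, mul_add, mul_one]
  refine add_le_add ?_ ?_
  · rw [abs_mul, abs_mul]
    calc |s| * |Real.sinc (s * t)| * |Real.sinc t ^ n| ≤ |s| * 1 * 1 := by
          gcongr
          · exact Real.abs_sinc_le_one _
          · exact my_abs_pow_sinc_le t n
      _ = |s| := by ring
  · obtain ⟨k, rfl⟩ : ∃ k, n = k + 1 := ⟨n - 1, by omega⟩
    have : |s * Real.sinc (s * t) * Real.sinc t ^ (k + 1)| * t ^ 2 =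
        |Real.sin (s * t)| * |Real.sin t| * |Real.sinc t ^ k| := by
      rw [← my_mul_sinc (s * t), ← my_mul_sinc t, ← abs_of_nonneg (sq_nonneg t), ← abs_mul,
        ← abs_mul, ← abs_mul]
      congr 1; ring
    rw [this]
    calc |Real.sin (s * t)| * |Real.sin t| * |Real.sinc t ^ k| ≤ 1 * 1 * 1 := by
          gcongr
          · exact Real.abs_sin_le_one _
          · exact Real.abs_sin_le_one _
          · exact my_abs_pow_sinc_le t k
      _ = 1 := by ring

lemma kern_integrable (s : ℝ) (n : ℕ) (hn : 1 ≤ n) :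
    Integrable fun t : ℝ => s * Real.sinc (s * t) * Real.sinc t ^ n := by
  refine (integrable_inv_one_add_sq.const_mul (|s| + 1)).mono' ?_
    (Filter.Eventually.of_forall fun t => kern_bound s t n hn)
  have := Real.continuous_sinc
  exact Continuous.aestronglyMeasurable (by fun_prop)

lemma sinc_pow_integrable (n : ℕ) (hn : 2 ≤ n) : Integrable fun t : ℝ => Real.sinc t ^ n := by
  have := kern_integrable 1 (n - 1) (by omega)
  refine this.congr (Filter.Eventually.of_forall fun t => ?_)
  obtain ⟨k, rfl⟩ : ∃ k, n = k + 1 := ⟨n - 1, by omega⟩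
  simp only [one_mul, Nat.add_sub_cancel]
  ring

noncomputable def Jint : ℝ := ∫ t : ℝ, Real.sinc t ^ 2

noncomputable def KF (n : ℕ) (s : ℝ) : ℝ :=
  Jint⁻¹ * ∫ t : ℝ, s * Real.sinc (s * t) * Real.sinc t ^ n

lemma KF_one (hJ : 0 < Jint) (s : ℝ) (hs : 0 ≤ s) : KF 1 s = min s 1 := by
  have hpt : ∀ t : ℝ, s * Real.sinc (s * t) * Real.sinc t ^ 1 =
      ((s + 1) / 2) ^ 2 * Real.sinc ((s + 1) / 2 * t) ^ 2 -
      ((s - 1) / 2) ^ 2 * Real.sinc ((s - 1) / 2 * t) ^ 2 := by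
    intro t
    by_cases ht : t = 0
    · simp [ht]; ring
    · have ht2 : t ^ 2 ≠ 0 := pow_ne_zero 2 ht
      refine mul_right_cancel₀ ht2 ?_
      have e1 : s * Real.sinc (s * t) * Real.sinc t ^ 1 * t ^ 2 =
          Real.sin (s * t) * Real.sin t := by
        rw [← my_mul_sinc (s * t), ← my_mul_sinc t]; ring
      have e2 : (((s + 1) / 2) ^ 2 * Real.sinc ((s + 1) / 2 * t) ^ 2 -
          ((s - 1) / 2) ^ 2 * Real.sinc ((s - 1) / 2 * t) ^ 2) * t ^ 2 =
          Real.sin ((s + 1) / 2 * t) ^ 2 - Real.sin ((s - 1) / 2 * t) ^ 2 := by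
        rw [← my_mul_sinc ((s + 1) / 2 * t), ← my_mul_sinc ((s - 1) / 2 * t)]; ring
      rw [e1, e2, show s * t = (s + 1) / 2 * t + (s - 1) / 2 * t by ring,
        show Real.sin t = Real.sin ((s + 1) / 2 * t - (s - 1) / 2 * t) by congr 1; ring,
        Real.sin_add, Real.sin_sub]
      have h1 := Real.sin_sq_add_cos_sq ((s + 1) / 2 * t)
      have h2 := Real.sin_sq_add_cos_sq ((s - 1) / 2 * t)
      set A := Real.sin ((s + 1) / 2 * t)
      set B := Real.sin ((s - 1) / 2 * t)
      set C := Real.cos ((s + 1) / 2 * t)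
      set D := Real.cos ((s - 1) / 2 * t)
      linear_combination A ^ 2 * h2 - B ^ 2 * h1
  have hsqI : ∀ a : ℝ, ∫ t, a ^ 2 * Real.sinc (a * t) ^ 2 = |a| * Jint := by
    intro a
    rw [integral_const_mul, Measure.integral_comp_mul_left (fun t => Real.sinc t ^ 2) a]
    rw [smul_eq_mul, ← mul_assoc, Jint]
    congr 1
    by_cases ha : a = 0
    · simp [ha]
    · rw [abs_inv, ← sq_abs]; have : |a| ≠ 0 := abs_ne_zero.2 ha
      field_simp
  have hi : ∀ a : ℝ, Integrable fun t => a ^ 2 * Real.sinc (a * t) ^ 2 := by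
    intro a
    by_cases ha : a = 0
    · simp [ha]
    · exact ((sinc_pow_integrable 2 le_rfl).comp_mul_left' ha).const_mul _
  rw [KF, integral_congr_ae (Filter.Eventually.of_forall hpt), integral_sub (hi _) (hi _),
    hsqI, hsqI, ← sub_mul, mul_comm, mul_assoc, mul_inv_cancel₀ hJ.ne', mul_one,
    abs_of_nonneg (by linarith)]
  rcases le_total s 1 with h | h
  · rw [abs_of_nonpos (by linarith), min_eq_left h]; ring
  · rw [abs_of_nonneg (by linarith), min_eq_right h]; ring

lemma kern_rec (s τ : ℝ) (hs : 0 ≤ s) (hτ : τ ≠ 0) :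
    ∫ r in Set.Ioo 0 (min s 1), (s + 1 - 2 * r) * Real.sinc ((s + 1 - 2 * r) * τ) =
      s * Real.sinc (s * τ) * Real.sinc τ := by
  have hT : 0 ≤ min s 1 := le_min hs zero_le_one
  rw [← integral_Ioc_eq_integral_Ioo, ← intervalIntegral.integral_of_le hT]
  have hd : ∀ r ∈ Set.uIcc 0 (min s 1), HasDerivAt
      (fun r => Real.cos ((s + 1 - 2 * r) * τ) / (2 * τ ^ 2))
      ((s + 1 - 2 * r) * Real.sinc ((s + 1 - 2 * r) * τ)) r := by
    intro r _
    have h1 : HasDerivAt (fun r : ℝ => (s + 1 - 2 * r) * τ) (-2 * τ) r := by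
      have := (((hasDerivAt_id r).const_mul 2).const_sub (s + 1)).mul_const τ
      simpa using this
    have h2 := h1.cos.div_const (2 * τ ^ 2)
    refine h2.congr_deriv ?_
    rw [← my_mul_sinc]
    field_simp
  have hc := Real.continuous_sinc
  rw [intervalIntegral.integral_eq_sub_of_hasDerivAt hd
    (Continuous.intervalIntegrable (by fun_prop) _ _)]
  have h3 : Real.cos ((s + 1 - 2 * min s 1) * τ) = Real.cos ((s - 1) * τ) := by
    rcases le_total s 1 with h | h
    · rw [min_eq_left h, ← Real.cos_neg]; congr 1; ring
    · rw [min_eq_right h]; congr 1; ring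
  have h4 : s * Real.sinc (s * τ) * Real.sinc τ = Real.sin (s * τ) * Real.sin τ / τ ^ 2 := by
    rw [← my_mul_sinc (s * τ), ← my_mul_sinc τ]; field_simp
  rw [h3, h4, mul_zero, sub_zero, sub_mul, add_mul, one_mul, Real.cos_add, Real.cos_sub]
  field_simp
  ring

lemma KF_prod_int (n : ℕ) (hn : 1 ≤ n) (s : ℝ) :
    Integrable (Function.uncurry fun r t : ℝ =>
      (s + 1 - 2 * r) * Real.sinc ((s + 1 - 2 * r) * t) * Real.sinc t ^ n)
      ((volume.restrict (Set.Ioo 0 (min s 1))).prod volume) := by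
  have hfin : IsFiniteMeasure (volume.restrict (Set.Ioo 0 (min s 1))) := ⟨by simp⟩
  have hb : Integrable (fun p : ℝ × ℝ => (s + 2) * (1 + p.2 ^ 2)⁻¹)
      ((volume.restrict (Set.Ioo 0 (min s 1))).prod volume) :=
    Integrable.mul_prod (f := fun _ : ℝ => s + 2) (g := fun t : ℝ => (1 + t ^ 2)⁻¹)
      (integrable_const _) integrable_inv_one_add_sq
  have hc := Real.continuous_sinc
  refine hb.mono' (Continuous.aestronglyMeasurable (by
    unfold Function.uncurry; fun_prop)) ?_
  have : ∀ᵐ p : ℝ × ℝ ∂((volume.restrict (Set.Ioo 0 (min s 1))).prod volume),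
      p.1 ∈ Set.Ioo 0 (min s 1) := by
    have h0 : ∀ᵐ r ∂(volume.restrict (Set.Ioo 0 (min s 1))), r ∈ Set.Ioo 0 (min s 1) :=
      ae_restrict_mem measurableSet_Ioo
    exact Measure.quasiMeasurePreserving_fst.ae h0
  filter_upwards [this] with p hp
  refine (kern_bound (s + 1 - 2 * p.1) p.2 n hn).trans ?_
  have h1 := hp.2.trans_le (min_le_left _ _)
  have h2 := hp.2.trans_le (min_le_right _ _)
  have h3 := hp.1
  refine mul_le_mul_of_nonneg_right ?_ (by positivity)
  rw [abs_of_nonneg (by linarith)]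
  linarith

lemma KF_rec (n : ℕ) (hn : 1 ≤ n) (s : ℝ) (hs : 0 ≤ s) :
    IntegrableOn (fun r => KF n (s + 1 - 2 * r)) (Set.Ioo 0 (min s 1)) ∧
    ∫ r in Set.Ioo 0 (min s 1), KF n (s + 1 - 2 * r) = KF (n + 1) s := by
  have hp := KF_prod_int n hn s
  refine ⟨hp.integral_prod_left.const_mul _, ?_⟩
  unfold KF
  rw [integral_const_mul, integral_integral_swap hp]
  congr 1
  have hne : ∀ᵐ t : ℝ, t ≠ 0 := by simp [ae_iff]
  refine integral_congr_ae ?_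
  filter_upwards [hne] with t ht
  rw [integral_mul_const, kern_rec s t hs ht, pow_succ]; ring

lemma KF_nonneg (hJ : 0 < Jint) (n : ℕ) (hn : 1 ≤ n) : ∀ s : ℝ, 0 ≤ s → 0 ≤ KF n s := by
  induction n, hn using Nat.le_induction with
  | base => intro s hs; rw [KF_one hJ s hs]; exact le_min hs zero_le_one
  | succ n hn ih =>
    intro s hs
    rw [← (KF_rec n hn s hs).2]
    refine setIntegral_nonneg measurableSet_Ioo fun r hr => ih _ ?_
    have h1 := hr.2.trans_le (min_le_left _ _)
    have h2 := hr.2.trans_le (min_le_right _ _)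
    linarith

lemma KF_lint (hJ : 0 < Jint) (n : ℕ) (hn : 1 ≤ n) (s : ℝ) (hs : 0 ≤ s) :
    ∫⁻ r in Set.Ioo 0 (min s 1), ENNReal.ofReal (KF n (s + 1 - 2 * r)) =
      ENNReal.ofReal (KF (n + 1) s) := by
  rw [← (KF_rec n hn s hs).2, ofReal_integral_eq_lintegral_ofReal (KF_rec n hn s hs).1]
  filter_upwards [ae_restrict_mem measurableSet_Ioo] with r hr
  refine KF_nonneg hJ n hn _ ?_
  have h1 := hr.2.trans_le (min_le_left _ _)
  have h2 := hr.2.trans_le (min_le_right _ _)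
  linarith

lemma KF_le (hJ : 0 < Jint) (m : ℕ) (hm : 1 ≤ m) (s : ℝ) (hs : 0 ≤ s) :
    KF (2 * m) s ≤ (Jint⁻¹ * ∫ t : ℝ, Real.sinc t ^ (2 * m)) * s := by
  rw [KF, mul_assoc]
  refine mul_le_mul_of_nonneg_left ?_ (inv_nonneg.2 hJ.le)
  rw [← integral_mul_const]
  refine integral_mono (kern_integrable s _ (by omega))
    ((sinc_pow_integrable _ (by omega)).mul_const s) fun t => ?_
  have h1 : 0 ≤ Real.sinc t ^ (2 * m) := by rw [pow_mul]; positivity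
  have h2 := Real.sinc_le_one (s * t)
  have h3 : s * Real.sinc (s * t) ≤ s := by nlinarith
  calc s * Real.sinc (s * t) * Real.sinc t ^ (2 * m) ≤ s * Real.sinc t ^ (2 * m) :=
        mul_le_mul_of_nonneg_right h3 h1
    _ = _ := mul_comm _ _
lemma lint_Ioi (g g' : ℝ → ℝ) (l : ℝ) (hd : ∀ x ∈ Set.Ici (0:ℝ), HasDerivAt g (g' x) x)
    (hpos : ∀ x ∈ Set.Ioi (0:ℝ), 0 ≤ g' x) (hl : Filter.Tendsto g Filter.atTop (nhds l)) :
    ∫⁻ x in Set.Ioi (0:ℝ), ENNReal.ofReal (g' x) = ENNReal.ofReal (l - g 0) := by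
  rw [← integral_Ioi_of_hasDerivAt_of_nonneg' hd hpos hl,
    ofReal_integral_eq_lintegral_ofReal (integrableOn_Ioi_deriv_of_nonneg' hd hpos hl)]
  filter_upwards [ae_restrict_mem measurableSet_Ioi] with x hx using hpos x hx

lemma tendsto_exp_neg_mul (u : ℝ) (hu : 0 < u) :
    Filter.Tendsto (fun t : ℝ => Real.exp (-(u * t))) Filter.atTop (nhds 0) :=
  Real.tendsto_exp_neg_atTop_nhds_zero.comp (Filter.tendsto_id.const_mul_atTop hu)

lemma inner_u (t : ℝ) (ht : 0 < t) :
    ∫⁻ u in Set.Ioi (0:ℝ), ENNReal.ofReal (u * Real.exp (-(u * t)) * Real.sin t ^ 2) =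
      ENNReal.ofReal (Real.sinc t ^ 2) := by
  rw [lint_Ioi (fun u => -(u / t + 1 / t ^ 2) * Real.exp (-(u * t)) * Real.sin t ^ 2) _ 0]
  · congr 1
    rw [Real.sinc_of_ne_zero ht.ne']
    simp
    field_simp
  · intro u _
    have h1 : HasDerivAt (fun u : ℝ => Real.exp (-(u * t))) (Real.exp (-(u * t)) * (-(1 * t))) u :=
      ((hasDerivAt_id u).mul_const t).neg.exp
    have h2 : HasDerivAt (fun u : ℝ => -(u / t + 1 / t ^ 2)) (-(1 / t)) u :=
      (((hasDerivAt_id u).div_const t).add_const _).neg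
    refine ((h2.mul h1).mul_const (Real.sin t ^ 2)).congr_deriv ?_
    field_simp
    ring
  · intro u hu
    have : (0:ℝ) < u := hu
    positivity
  · have h1 : Filter.Tendsto (fun u : ℝ => u * Real.exp (-(u * t))) Filter.atTop (nhds 0) := by
      have := (Real.tendsto_pow_mul_exp_neg_atTop_nhds_zero 1).comp
        (Filter.tendsto_id.const_mul_atTop ht)
      have := this.const_mul t⁻¹
      simp only [mul_zero] at this
      refine this.congr fun u => ?_
      simp only [Function.comp, id]
      rw [mul_comm u t]
      field_simp
    have h2 := (tendsto_exp_neg_mul t ht)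
    have h3 := ((h1.const_mul (-t⁻¹)).add (h2.const_mul (-(1 / t ^ 2)))).mul_const (Real.sin t ^ 2)
    simp only [mul_zero, add_zero, zero_mul] at h3
    refine h3.congr fun u => ?_
    rw [mul_comm t u]
    ring

lemma inner_t (u : ℝ) (hu : 0 < u) :
    ∫⁻ t in Set.Ioi (0:ℝ), ENNReal.ofReal (u * Real.exp (-(u * t)) * Real.sin t ^ 2) =
      ENNReal.ofReal (2 / (u ^ 2 + 4)) := by
  have hp : 0 < u ^ 2 + 4 := by positivity
  rw [lint_Ioi (fun t => Real.exp (-(u * t)) * (-(1 / 2) -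
    u / 2 * (-u * Real.cos (2 * t) + 2 * Real.sin (2 * t)) / (u ^ 2 + 4))) _ 0]
  · congr 1
    simp
    field_simp
    ring
  · intro t _
    have h1 : HasDerivAt (fun t : ℝ => Real.exp (-(u * t))) (Real.exp (-(u * t)) * (-(u * 1))) t :=
      ((hasDerivAt_id t).const_mul u).neg.exp
    have h0 : HasDerivAt (fun t : ℝ => 2 * t) (2 * 1) t := (hasDerivAt_id t).const_mul 2
    have h2 := ((((h0.cos.const_mul (-u)).add (h0.sin.const_mul 2)).const_mul (u / 2)).div_const
      (u ^ 2 + 4)).const_sub (-(1 / 2))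
    refine (h1.mul h2).congr_deriv ?_
    have : Real.sin t ^ 2 = (1 - Real.cos (2 * t)) / 2 := by rw [Real.sin_sq_eq_half_sub]; ring
    rw [this]
    simp only [Pi.add_apply]
    field_simp
    ring
  · intro t _
    positivity
  · have h2 := (tendsto_exp_neg_mul u hu).mul_const (1 / 2 + u / 2 * (u + 2) / (u ^ 2 + 4))
    rw [zero_mul] at h2
    refine squeeze_zero_norm (fun t => ?_) h2
    rw [norm_mul, Real.norm_eq_abs, Real.norm_eq_abs, abs_of_pos (Real.exp_pos _)]
    refine mul_le_mul_of_nonneg_left ?_ (Real.exp_pos _).le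
    have hc := Real.abs_cos_le_one (2 * t)
    have hs := Real.abs_sin_le_one (2 * t)
    have h3 : |u / 2 * (-u * Real.cos (2 * t) + 2 * Real.sin (2 * t)) / (u ^ 2 + 4)| ≤
        u / 2 * (u + 2) / (u ^ 2 + 4) := by
      rw [abs_div, abs_of_pos hp, abs_mul, abs_of_pos (by positivity : 0 < u / 2)]
      gcongr
      calc |-u * Real.cos (2 * t) + 2 * Real.sin (2 * t)|
          ≤ |-u * Real.cos (2 * t)| + |2 * Real.sin (2 * t)| := abs_add_le _ _
        _ ≤ u + 2 := by
          rw [abs_mul, abs_mul, abs_neg, abs_of_pos hu, abs_two]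
          nlinarith
    calc _ ≤ |-(1 / 2 : ℝ)| + _ := abs_sub _ _
      _ ≤ _ := by rw [abs_neg, abs_of_pos (by norm_num : (0:ℝ) < 1 / 2)]; gcongr

lemma Jint_eq : Jint = Real.pi := by
  have h1 : Jint = 2 * ∫ t in Set.Ioi (0:ℝ), Real.sinc t ^ 2 := by
    rw [← integral_comp_abs (f := fun t => Real.sinc t ^ 2), Jint]
    refine integral_congr_ae (Filter.Eventually.of_forall fun t => ?_)
    rcases abs_choice t with h | h <;> simp only [h, Real.sinc_neg]
  have h2 : ENNReal.ofReal (∫ t in Set.Ioi (0:ℝ), Real.sinc t ^ 2) =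
      ENNReal.ofReal (Real.pi / 2) := by
    rw [ofReal_integral_eq_lintegral_ofReal (sinc_pow_integrable 2 le_rfl).integrableOn
      (Filter.Eventually.of_forall fun t => by positivity)]
    calc ∫⁻ t in Set.Ioi (0:ℝ), ENNReal.ofReal (Real.sinc t ^ 2)
        = ∫⁻ t in Set.Ioi (0:ℝ), ∫⁻ u in Set.Ioi (0:ℝ),
          ENNReal.ofReal (u * Real.exp (-(u * t)) * Real.sin t ^ 2) :=
          setLIntegral_congr_fun measurableSet_Ioi fun t ht => (inner_u t ht).symm
      _ = ∫⁻ u in Set.Ioi (0:ℝ), ∫⁻ t in Set.Ioi (0:ℝ),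
          ENNReal.ofReal (u * Real.exp (-(u * t)) * Real.sin t ^ 2) := by
          refine lintegral_lintegral_swap (Measurable.aemeasurable ?_)
          unfold Function.uncurry
          fun_prop
      _ = ∫⁻ u in Set.Ioi (0:ℝ), ENNReal.ofReal (2 / (u ^ 2 + 4)) :=
          setLIntegral_congr_fun measurableSet_Ioi fun t ht => inner_t t ht
      _ = ENNReal.ofReal (Real.pi / 2) := by
          rw [lint_Ioi (fun u => Real.arctan (u / 2)) _ (Real.pi / 2)]
          · simp
          · intro u _
            refine ((hasDerivAt_id u).div_const 2).arctan.congr_deriv ?_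
            simp only [id]
            field_simp
            ring
          · intro u _
            positivity
          · exact (Real.tendsto_arctan_atTop.mono_right nhdsWithin_le_nhds).comp
              (Filter.tendsto_id.atTop_div_const (by norm_num))
  have h3 : 0 ≤ ∫ t in Set.Ioi (0:ℝ), Real.sinc t ^ 2 :=
    setIntegral_nonneg measurableSet_Ioi fun t _ => by positivity
  rw [ENNReal.ofReal_eq_ofReal_iff h3 (by positivity)] at h2
  rw [h1, h2]; ring

lemma sinc_le_exp (t : ℝ) (h0 : 0 ≤ t) (h1 : t ≤ Real.pi) :
    Real.sinc t ≤ Real.exp (-(t ^ 2 / 6)) := by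
  -- sin t - t cos t ≥ 0
  have hA : ∀ x ∈ Set.Icc 0 Real.pi, 0 ≤ Real.sin x - x * Real.cos x := by
    have hm : MonotoneOn (fun x => Real.sin x - x * Real.cos x) (Set.Icc 0 Real.pi) := by
      refine monotoneOn_of_hasDerivWithinAt_nonneg (f' := fun x => x * Real.sin x)
        (convex_Icc _ _) (by fun_prop) (fun x _ => HasDerivAt.hasDerivWithinAt ?_) ?_
      · refine ((Real.hasDerivAt_sin x).sub ((hasDerivAt_id x).mul
          (Real.hasDerivAt_cos x))).congr_deriv ?_
        simp only [id]; ring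
      · intro x hx
        rw [interior_Icc] at hx
        exact mul_nonneg hx.1.le (Real.sin_nonneg_of_nonneg_of_le_pi hx.1.le hx.2.le)
    intro x hx
    simpa using hm ⟨le_rfl, Real.pi_pos.le⟩ hx hx.1
  have hB : ∀ x ∈ Set.Icc 0 Real.pi, 0 ≤ Real.sin x - x * Real.cos x - x ^ 2 / 3 * Real.sin x := by
    have hm : MonotoneOn (fun x => Real.sin x - x * Real.cos x - x ^ 2 / 3 * Real.sin x)
        (Set.Icc 0 Real.pi) := by
      refine monotoneOn_of_hasDerivWithinAt_nonneg
        (f' := fun x => x / 3 * (Real.sin x - x * Real.cos x))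
        (convex_Icc _ _) (by fun_prop) (fun x _ => HasDerivAt.hasDerivWithinAt ?_) ?_
      · refine (((Real.hasDerivAt_sin x).sub ((hasDerivAt_id x).mul
          (Real.hasDerivAt_cos x))).sub (((hasDerivAt_pow 2 x).div_const 3).mul
          (Real.hasDerivAt_sin x))).congr_deriv ?_
        simp only [id]; push_cast; ring
      · intro x hx
        rw [interior_Icc] at hx
        exact mul_nonneg (by linarith [hx.1]) (hA x ⟨hx.1.le, hx.2.le⟩)
    intro x hx
    simpa using hm ⟨le_rfl, Real.pi_pos.le⟩ hx hx.1
  have hc := Real.continuous_sinc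
  have hC : AntitoneOn (fun x => Real.exp (x ^ 2 / 6) * Real.sinc x) (Set.Icc 0 Real.pi) := by
    refine antitoneOn_of_hasDerivWithinAt_nonpos
      (f' := fun x => Real.exp (x ^ 2 / 6) / x ^ 2 *
        (-(Real.sin x - x * Real.cos x - x ^ 2 / 3 * Real.sin x)))
      (convex_Icc _ _) (by fun_prop) (fun x hx => HasDerivAt.hasDerivWithinAt ?_) ?_
    · rw [interior_Icc] at hx
      have hx0 : x ≠ 0 := hx.1.ne'
      have h2 : HasDerivAt (fun x => Real.exp (x ^ 2 / 6))
          (Real.exp (x ^ 2 / 6) * (((2:ℕ):ℝ) * x ^ (2 - 1) / 6)) x :=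
        ((hasDerivAt_pow 2 x).div_const 6).exp
      have h3 := h2.mul ((Real.hasDerivAt_sin x).div (hasDerivAt_id x) hx0)
      refine (h3.congr_of_eventuallyEq ?_).congr_deriv ?_
      · filter_upwards [eventually_ne_nhds hx0] with y hy
        simp [Real.sinc_of_ne_zero hy]
      · simp only [id, Pi.div_apply]; push_cast
        field_simp
        ring
    · intro x hx
      rw [interior_Icc] at hx
      refine mul_nonpos_of_nonneg_of_nonpos (by positivity) ?_
      have := hB x ⟨hx.1.le, hx.2.le⟩
      linarith
  have := hC ⟨le_rfl, Real.pi_pos.le⟩ ⟨h0, h1⟩ h0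
  simp at this
  rw [Real.exp_neg, ← one_div, le_div_iff₀ (Real.exp_pos _), mul_comm]
  exact this
lemma sinc_pow_int_le (m : ℕ) (hm : 1 ≤ m) :
    ∫ t : ℝ, Real.sinc t ^ (2 * m) ≤
      √(Real.pi / (m / 3)) + 2 * (Real.pi ^ (-(2 * m : ℝ) + 1) / (2 * m - 1)) := by
  have hm1 : (1:ℝ) ≤ m := by exact_mod_cast hm
  have h1 : ∫ t : ℝ, Real.sinc t ^ (2 * m) = 2 * ∫ t in Set.Ioi (0:ℝ), Real.sinc t ^ (2 * m) := by
    rw [← integral_comp_abs (f := fun t => Real.sinc t ^ (2 * m))]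
    refine integral_congr_ae (Filter.Eventually.of_forall fun t => ?_)
    rcases abs_choice t with h | h <;> simp only [h, Real.sinc_neg]
  have hg : IntegrableOn (fun t : ℝ => Real.exp (-(m / 3 : ℝ) * t ^ 2)) (Set.Ioi 0) :=
    (integrable_exp_neg_mul_sq (by positivity)).integrableOn
  have ht : IntegrableOn (fun t : ℝ => t ^ (-(2 * m : ℝ))) (Set.Ioi Real.pi) :=
    integrableOn_Ioi_rpow_of_lt (by linarith) Real.pi_pos
  have ht' : Integrable ((Set.Ioi Real.pi).indicator fun t : ℝ => t ^ (-(2 * m : ℝ))) :=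
    ht.integrable_indicator measurableSet_Ioi
  have h2 : ∫ t in Set.Ioi (0:ℝ), Real.sinc t ^ (2 * m) ≤
      ∫ t in Set.Ioi (0:ℝ), (Real.exp (-(m / 3 : ℝ) * t ^ 2) +
        (Set.Ioi Real.pi).indicator (fun t : ℝ => t ^ (-(2 * m : ℝ))) t) := by
    refine setIntegral_mono_on (sinc_pow_integrable _ (by omega)).integrableOn
      (hg.add ht'.integrableOn) measurableSet_Ioi fun t ht0 => ?_
    have ht0 : 0 < t := ht0
    rcases le_or_gt t Real.pi with h | h
    · rw [Set.indicator_of_notMem (show t ∉ Set.Ioi Real.pi from not_lt.2 h), add_zero]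
      have hs : 0 ≤ Real.sinc t := by
        rw [Real.sinc_of_ne_zero ht0.ne']
        exact div_nonneg (Real.sin_nonneg_of_nonneg_of_le_pi ht0.le h) ht0.le
      calc Real.sinc t ^ (2 * m) ≤ Real.exp (-(t ^ 2 / 6)) ^ (2 * m) :=
            pow_le_pow_left₀ hs (sinc_le_exp t ht0.le h) _
        _ = _ := by rw [← Real.exp_nat_mul]; congr 1; push_cast; ring
    · rw [Set.indicator_of_mem (show t ∈ Set.Ioi Real.pi from h)]
      have : Real.sinc t ^ (2 * m) ≤ t ^ (-(2 * m : ℝ)) := by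
        rw [Real.rpow_neg ht0.le, show (2 * m : ℝ) = ((2 * m : ℕ) : ℝ) by push_cast; ring,
          Real.rpow_natCast, ← inv_pow, ← Even.pow_abs (even_two_mul m)]
        refine pow_le_pow_left₀ (abs_nonneg _) ?_ _
        rw [Real.sinc_of_ne_zero ht0.ne', abs_div, abs_of_pos ht0, ← one_div]
        gcongr
        exact Real.abs_sin_le_one t
      linarith [Real.exp_pos (-(m / 3 : ℝ) * t ^ 2)]
  rw [integral_add hg ht'.integrableOn, integral_gaussian_Ioi, setIntegral_indicator measurableSet_Ioi,
    Set.inter_eq_self_of_subset_right (Set.Ioi_subset_Ioi Real.pi_pos.le),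
    integral_Ioi_rpow_of_lt (by linarith) Real.pi_pos] at h2
  rw [h1]
  have h3 : -Real.pi ^ (-(2 * m : ℝ) + 1) / (-(2 * m : ℝ) + 1) =
      Real.pi ^ (-(2 * m : ℝ) + 1) / (2 * m - 1) := by
    rw [show (-(2 * m : ℝ) + 1) = -(2 * m - 1 : ℝ) by ring, neg_div_neg_eq]
  rw [h3] at h2
  linarith

lemma ball_const (m : ℕ) (hm : 1 ≤ m) :
    Jint⁻¹ * ∫ t : ℝ, Real.sinc t ^ (2 * m) ≤ 1 / √m := by
  have hpi := Real.pi_pos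
  rcases hm.eq_or_lt with rfl | hm2
  · have : ∫ t : ℝ, Real.sinc t ^ (2 * 1) = Jint := rfl
    rw [this, Jint_eq]
    simp
  · have hm2' : (2:ℝ) ≤ m := by exact_mod_cast hm2
    have hsm : 0 < √(m:ℝ) := Real.sqrt_pos.2 (by linarith)
    have h := sinc_pow_int_le m hm
    rw [Jint_eq]
    have e1 : √(Real.pi / (m / 3)) ≤ 0.978 * Real.pi / √m := by
      rw [Real.sqrt_le_left (by positivity), div_pow, Real.sq_sqrt (by linarith), mul_pow]
      rw [show Real.pi / ((m:ℝ) / 3) = 3 * Real.pi / m by field_simp]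
      refine div_le_div_of_nonneg_right ?_ (by linarith)
      nlinarith [Real.pi_gt_d4]
    have e2 : Real.pi ^ (-(2 * m : ℝ) + 1) / (2 * m - 1) ≤ 0.011 * Real.pi / √m := by
      rw [Real.rpow_add hpi, Real.rpow_one, Real.rpow_neg hpi.le,
        show (2 * m : ℝ) = ((2 * m : ℕ) : ℝ) by push_cast; ring, Real.rpow_natCast, pow_mul]
      have q1 : (9.8:ℝ) ^ 2 ≤ (Real.pi ^ 2) ^ m := by
        have : (9.8:ℝ) ≤ Real.pi ^ 2 := by nlinarith [Real.pi_gt_d4]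
        calc (9.8:ℝ) ^ 2 ≤ (9.8:ℝ) ^ m := pow_le_pow_right₀ (by norm_num) hm2
          _ ≤ _ := pow_le_pow_left₀ (by norm_num) this m
      have q2 : √(m:ℝ) ≤ 2 * m - 1 := by
        rw [Real.sqrt_le_left (by linarith)]
        nlinarith
      rw [div_le_div_iff₀ (by push_cast; linarith) hsm]
      have q3 : ((Real.pi ^ 2) ^ m)⁻¹ ≤ 0.011 := by
        rw [inv_le_comm₀ (by positivity) (by norm_num)]
        refine le_trans (by norm_num) q1
      push_cast
      gcongr
    rw [inv_mul_le_iff₀ hpi]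
    calc _ ≤ _ := h
      _ ≤ 0.978 * Real.pi / √m + 2 * (0.011 * Real.pi / √m) := by gcongr
      _ = _ := by ring

lemma conc_conv (n : ℕ) (hn : 1 ≤ n) (ν μ : Measure ℝ) [SFinite ν] [IsProbabilityMeasure μ]
    (hμ : μ ≤ volume) (h : Conc (KF n) ν) : Conc (KF (n + 1)) (ν ∗ μ) := by
  have hJ : 0 < Jint := by rw [Jint_eq]; exact Real.pi_pos
  have hac : μ ≪ volume := Measure.absolutelyContinuous_of_le hμ
  let f : ℝ → ENNReal := fun x => min (μ.rnDeriv volume x) 1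
  have hf : Measurable f := (Measure.measurable_rnDeriv _ _).min measurable_const
  have hfe : μ = volume.withDensity f := by
    refine (Measure.withDensity_rnDeriv_eq μ volume hac).symm.trans (withDensity_congr_ae ?_)
    filter_upwards [Measure.rnDeriv_le_one_of_le hμ] with x hx
    exact (min_eq_left hx).symm
  have hfi : ∫⁻ x, f x = 1 := by
    have := measure_univ (μ := μ)
    rw [hfe, withDensity_apply _ MeasurableSet.univ, Measure.restrict_univ] at this
    exact this
  intro φ hφ hφ1 s hs hφi
  rw [Measure.lintegral_conv hφ, ← KF_lint hJ n hn s hs]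
  refine le_trans (le_of_eq ?_)
    (rearr_step (KF n) ν h f hf (fun x => min_le_right _ _) hfi φ hφ hφ1 s hs hφi)
  refine lintegral_congr fun z => ?_
  have hm : Measurable fun y => φ (z + y) := hφ.comp (by fun_prop)
  conv_lhs => rw [hfe]
  rw [lintegral_withDensity_eq_lintegral_mul volume hf hm]
  refine lintegral_congr fun y => ?_
  simp [mul_comm]

lemma conc_base (μ : Measure ℝ) [IsProbabilityMeasure μ] (hμ : μ ≤ volume) : Conc (KF 1) μ := by
  have hJ : 0 < Jint := by rw [Jint_eq]; exact Real.pi_pos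
  intro φ hφ hφ1 s hs hφi
  rw [KF_one hJ s hs, ENNReal.ofReal_min, ← hφi, ENNReal.ofReal_one]
  refine le_min (lintegral_mono' hμ le_rfl) ?_
  calc ∫⁻ x, φ x ∂μ ≤ ∫⁻ _, 1 ∂μ := lintegral_mono hφ1
    _ = 1 := by simp

lemma sym_conv (μ : Measure ℝ) [IsProbabilityMeasure μ] (hμ : μ ≤ volume) (m : ℕ) (hm : 1 ≤ m) :
    ∃ ν : Measure ℝ, IsProbabilityMeasure ν ∧ Conc (KF (2 * m)) ν ∧
      ∀ t, charFun ν t = ((‖charFun μ t‖ ^ (2 * m) : ℝ) : ℂ) := by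
  let μ' : Measure ℝ := μ.map (fun x => (-1) * x)
  have hm1 : Measurable fun x : ℝ => (-1) * x := by fun_prop
  have : IsProbabilityMeasure μ' := Measure.isProbabilityMeasure_map hm1.aemeasurable
  have hμ' : μ' ≤ volume := by
    have h1 : μ' ≤ volume.map (fun x : ℝ => (-1) * x) := Measure.map_mono hμ hm1
    have h2 : (volume : Measure ℝ).map (fun x : ℝ => (-1) * x) = volume := by
      simp only [neg_one_mul]
      exact Measure.map_neg_eq_self volume
    rwa [h2] at h1
  have hch : ∀ t, charFun μ t * charFun μ' t = ((‖charFun μ t‖ ^ 2 : ℝ) : ℂ) := by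
    intro t
    rw [charFun_map_mul, neg_one_mul, charFun_neg, Complex.mul_conj, Complex.normSq_eq_norm_sq]
  induction m, hm using Nat.le_induction with
  | base =>
    refine ⟨μ ∗ μ', inferInstance, conc_conv 1 le_rfl μ μ' hμ' (conc_base μ hμ), fun t => ?_⟩
    rw [charFun_conv, hch]
  | succ m hm ih =>
    obtain ⟨ν, hν, hc, hcf⟩ := ih
    refine ⟨(ν ∗ μ) ∗ μ', inferInstance, ?_, fun t => ?_⟩
    · exact conc_conv (2 * m + 1) (by omega) _ _ hμ' (conc_conv (2 * m) (by omega) _ _ hμ hc)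
    · rw [charFun_conv, charFun_conv, hcf, mul_assoc, hch, ← Complex.ofReal_mul]
      congr 1
      ring

lemma conc_le (m : ℕ) (hm : 1 ≤ m) (ν : Measure ℝ) (h : Conc (KF (2 * m)) ν) :
    ν ≤ ENNReal.ofReal (1 / √m) • volume := by
  have hJ : 0 < Jint := by rw [Jint_eq]; exact Real.pi_pos
  refine Measure.le_iff.2 fun A hA => ?_
  rw [Measure.smul_apply, smul_eq_mul]
  by_cases hfin : volume A = ⊤
  · rw [hfin, ENNReal.mul_top]
    · exact le_top
    · have : (0:ℝ) < m := by exact_mod_cast hm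
      simp [this]
  · have h1 := h (A.indicator 1) (measurable_one.indicator hA) (fun x => by
      by_cases hx : x ∈ A <;> simp [hx]) (volume A).toReal ENNReal.toReal_nonneg (by
      rw [lintegral_indicator_one hA, ENNReal.ofReal_toReal hfin])
    rw [lintegral_indicator_one hA] at h1
    refine h1.trans ?_
    conv_rhs => rw [← ENNReal.ofReal_toReal hfin]
    rw [← ENNReal.ofReal_mul (by positivity)]
    refine ENNReal.ofReal_le_ofReal ?_
    refine (KF_le hJ m hm _ ENNReal.toReal_nonneg).trans ?_
    exact mul_le_mul_of_nonneg_right (ball_const m hm) ENNReal.toReal_nonneg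

lemma gauss_step (ν : Measure ℝ) [IsProbabilityMeasure ν] (c : ℝ) (hc : 0 ≤ c)
    (hν : ν ≤ ENNReal.ofReal c • volume) (G : ℝ → ℝ) (hG : ∀ t, 0 ≤ G t)
    (hcf : ∀ t, charFun ν t = (G t : ℂ)) (v : NNReal) (hv : 0 < v) :
    ∫⁻ t, ENNReal.ofReal (Real.exp (-t ^ 2 / (2 * v)) * G t) ≤
      ENNReal.ofReal (2 * Real.pi * c) := by
  have hv' : (0:ℝ) < v := by exact_mod_cast hv
  set γ := gaussianReal 0 v with hγ
  have hGc : G = fun t => (charFun ν t).re := by funext t; rw [hcf]; simp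
  have hGm : Measurable G := by
    rw [hGc]; exact Complex.measurable_re.comp measurable_charFun
  have hswap : ∫ t, charFun ν t ∂γ = ∫ x, charFun γ x ∂ν := by
    simp only [charFun_apply_real]
    rw [integral_integral_swap]
    · refine integral_congr_ae (Filter.Eventually.of_forall fun x => ?_)
      refine integral_congr_ae (Filter.Eventually.of_forall fun t => ?_)
      simp only
      congr 1; ring
    · refine Integrable.of_bound (C := 1) (Continuous.aestronglyMeasurable ?_) ?_
      · unfold Function.uncurry; fun_prop
      · refine Filter.Eventually.of_forall fun p => ?_
        simp only [Function.uncurry]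
        rw [← Complex.ofReal_mul, Complex.norm_exp_ofReal_mul_I]
  have hR : ∫ t, G t ∂γ = ∫ x, Real.exp (-(v / 2 : ℝ) * x ^ 2) ∂ν := by
    have h2 : ∀ x, charFun γ x = ((Real.exp (-(v / 2 : ℝ) * x ^ 2) : ℝ) : ℂ) := by
      intro x
      rw [hγ, charFun_gaussianReal]
      push_cast
      congr 1
      ring
    simp only [hcf, h2] at hswap
    rw [integral_complex_ofReal, integral_complex_ofReal] at hswap
    exact_mod_cast hswap
  have hGi : Integrable G γ := by
    refine Integrable.of_bound (C := 1) hGm.aestronglyMeasurable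
      (Filter.Eventually.of_forall fun t => ?_)
    have := norm_charFun_le_one (μ := ν) t
    rw [hcf] at this
    simpa using this
  have h3 : ∫⁻ t, ENNReal.ofReal (G t) ∂γ ≤ ENNReal.ofReal (c * √(Real.pi / (v / 2))) := by
    rw [← ofReal_integral_eq_lintegral_ofReal hGi (Filter.Eventually.of_forall hG), hR]
    rw [ofReal_integral_eq_lintegral_ofReal]
    · calc ∫⁻ x, ENNReal.ofReal (Real.exp (-(v / 2 : ℝ) * x ^ 2)) ∂ν
          ≤ ∫⁻ x, ENNReal.ofReal (Real.exp (-(v / 2 : ℝ) * x ^ 2))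
              ∂(ENNReal.ofReal c • volume) := lintegral_mono' hν le_rfl
        _ = ENNReal.ofReal c * ∫⁻ x, ENNReal.ofReal (Real.exp (-(v / 2 : ℝ) * x ^ 2)) := by
            rw [lintegral_smul_measure, smul_eq_mul]
        _ = ENNReal.ofReal (c * √(Real.pi / (v / 2))) := by
            rw [← ofReal_integral_eq_lintegral_ofReal (integrable_exp_neg_mul_sq (by positivity))
              (Filter.Eventually.of_forall fun t => (Real.exp_pos _).le), integral_gaussian,
              ENNReal.ofReal_mul hc]
    · refine Integrable.of_bound (C := 1) (Continuous.aestronglyMeasurable (by fun_prop))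
        (Filter.Eventually.of_forall fun x => ?_)
      rw [Real.norm_eq_abs, abs_of_pos (Real.exp_pos _), Real.exp_le_one_iff]
      have : 0 ≤ (v / 2 : ℝ) * x ^ 2 := by positivity
      linarith
    · exact Filter.Eventually.of_forall fun t => (Real.exp_pos _).le
  rw [hγ, gaussianReal_of_var_ne_zero 0 hv.ne', lintegral_withDensity_eq_lintegral_mul _
    (measurable_gaussianPDF 0 v) hGm.ennreal_ofReal] at h3
  have h4 : ∀ t, ENNReal.ofReal (Real.exp (-t ^ 2 / (2 * v)) * G t) =
      ENNReal.ofReal (√(2 * Real.pi * v)) *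
        (gaussianPDF 0 v * fun t => ENNReal.ofReal (G t)) t := by
    intro t
    have hs : 0 < √(2 * Real.pi * v) := Real.sqrt_pos.2 (by positivity)
    rw [Pi.mul_apply, gaussianPDF, gaussianPDFReal, ← ENNReal.ofReal_mul (by positivity),
      ← ENNReal.ofReal_mul hs.le]
    congr 1
    rw [sub_zero]
    field_simp
  rw [lintegral_congr h4, lintegral_const_mul _ ((measurable_gaussianPDF 0 v).mul
    hGm.ennreal_ofReal)]
  calc _ ≤ ENNReal.ofReal (√(2 * Real.pi * v)) * ENNReal.ofReal (c * √(Real.pi / (v / 2))) := by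
        gcongr
    _ = _ := by
        rw [← ENNReal.ofReal_mul (by positivity)]
        congr 1
        rw [mul_left_comm, ← Real.sqrt_mul (by positivity),
          show 2 * Real.pi * v * (Real.pi / (v / 2)) = (2 * Real.pi) ^ 2 by field_simp,
          Real.sqrt_sq (by positivity)]
        ring

lemma core (μ : Measure ℝ) [IsProbabilityMeasure μ] (hμ : μ ≤ volume) (m : ℕ) (hm : 1 ≤ m) :
    ∫⁻ t, ENNReal.ofReal (‖charFun μ t‖ ^ (2 * m)) ≤
      ENNReal.ofReal (2 * Real.pi * (1 / √m)) := by
  obtain ⟨ν, hν, hc, hcf⟩ := sym_conv μ hμ m hm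
  have hle := conc_le m hm ν hc
  have hG : ∀ t, 0 ≤ ‖charFun μ t‖ ^ (2 * m) := fun t => by positivity
  have hb : ∀ n : ℕ, ∫⁻ t, ENNReal.ofReal
      (Real.exp (-t ^ 2 / (2 * ((n + 1 : NNReal) : ℝ))) * ‖charFun μ t‖ ^ (2 * m)) ≤
      ENNReal.ofReal (2 * Real.pi * (1 / √m)) := fun n =>
    gauss_step ν (1 / √m) (by positivity) hle _ hG hcf (n + 1) (by positivity)
  have hcm : Measurable (charFun μ) := measurable_charFun
  have hlim : ∀ t : ℝ, Filter.Tendsto (fun n : ℕ => ENNReal.ofReal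
      (Real.exp (-t ^ 2 / (2 * ((n + 1 : NNReal) : ℝ))) * ‖charFun μ t‖ ^ (2 * m))) Filter.atTop
      (nhds (ENNReal.ofReal (‖charFun μ t‖ ^ (2 * m)))) := by
    intro t
    refine ENNReal.tendsto_ofReal ?_
    have h1 : Filter.Tendsto (fun n : ℕ => -t ^ 2 / (2 * ((n + 1 : NNReal) : ℝ))) Filter.atTop
        (nhds 0) := by
      have := (tendsto_one_div_add_atTop_nhds_zero_nat (𝕜 := ℝ)).const_mul (-t ^ 2 / 2)
      rw [mul_zero] at this
      refine this.congr fun n => ?_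
      push_cast
      field_simp
    have h2 := ((Real.continuous_exp.tendsto 0).comp h1).mul_const (‖charFun μ t‖ ^ (2 * m))
    simpa using h2
  calc ∫⁻ t, ENNReal.ofReal (‖charFun μ t‖ ^ (2 * m))
      = ∫⁻ t, Filter.liminf (fun n : ℕ => ENNReal.ofReal
        (Real.exp (-t ^ 2 / (2 * ((n + 1 : NNReal) : ℝ))) * ‖charFun μ t‖ ^ (2 * m)))
        Filter.atTop := lintegral_congr fun t => (hlim t).liminf_eq.symm
    _ ≤ Filter.liminf (fun n : ℕ => ∫⁻ t, ENNReal.ofReal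
        (Real.exp (-t ^ 2 / (2 * ((n + 1 : NNReal) : ℝ))) * ‖charFun μ t‖ ^ (2 * m)))
        Filter.atTop := lintegral_liminf_le fun n => by fun_prop
    _ ≤ _ := Filter.liminf_le_of_frequently_le' (Filter.Frequently.of_forall hb)

theorem stmt_4 {Ω : Type*} [MeasurableSpace Ω] {P : Measure Ω} [IsProbabilityMeasure P]
    (ξ : Ω → ℝ) (q : ℝ → ℝ) (M : ℝ)
    (hmeas : Measurable ξ)
    (hdens : Measure.map ξ P =
      (volume : Measure ℝ).withDensity (fun x => ENNReal.ofReal (q x)))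
    (hqM : ∀ x, q x ≤ M)
    (g : ℝ → ℂ)
    (hg : ∀ t : ℝ, g t = ∫ ω, Complex.exp (Complex.I * t * ξ ω) ∂P)
    (m : ℕ) (hm : 1 ≤ m) :
    ∫⁻ t : ℝ, ENNReal.ofReal (‖g t‖ ^ (2 * m)) ≤
      ENNReal.ofReal (2 * Real.pi * (M / Real.sqrt m)) := by
  set μ := Measure.map ξ P with hμdef
  have hμp : IsProbabilityMeasure μ := Measure.isProbabilityMeasure_map hmeas.aemeasurable
  have hle : μ ≤ ENNReal.ofReal M • volume := by
    rw [hdens, ← withDensity_const]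
    exact withDensity_mono (Filter.Eventually.of_forall fun x => ENNReal.ofReal_le_ofReal (hqM x))
  have hM : 0 < M := by
    by_contra h
    rw [ENNReal.ofReal_of_nonpos (not_lt.1 h), zero_smul] at hle
    have := hle Set.univ
    simp at this
  have hgc : ∀ t, g t = charFun μ t := by
    intro t
    rw [hg, charFun_apply_real, hμdef, integral_map hmeas.aemeasurable
      (Continuous.aestronglyMeasurable (by fun_prop))]
    refine integral_congr_ae (Filter.Eventually.of_forall fun ω => ?_)
    simp only
    congr 1; ring
  let κ : Measure ℝ := μ.map (fun x => M * x)
  have hMm : Measurable fun x : ℝ => M * x := by fun_prop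
  have hκp : IsProbabilityMeasure κ := Measure.isProbabilityMeasure_map hMm.aemeasurable
  have hvol : (volume : Measure ℝ).map (fun x => M * x) = ENNReal.ofReal |M⁻¹| • volume :=
    Real.map_volume_mul_left hM.ne'
  have hκ : κ ≤ volume := by
    have h1 : κ ≤ (ENNReal.ofReal M • volume).map (fun x : ℝ => M * x) := Measure.map_mono hle hMm
    rw [Measure.map_smul, hvol, smul_smul, ← ENNReal.ofReal_mul hM.le,
      abs_of_pos (inv_pos.2 hM), mul_inv_cancel₀ hM.ne', ENNReal.ofReal_one, one_smul] at h1
    exact h1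
  have hcm : Measurable (charFun μ) := measurable_charFun
  have hmain := core κ hκ m hm
  have h1 : ∫⁻ t, ENNReal.ofReal (‖charFun κ t‖ ^ (2 * m)) =
      ENNReal.ofReal M⁻¹ * ∫⁻ t, ENNReal.ofReal (‖g t‖ ^ (2 * m)) := by
    have h2 : ∀ t, charFun κ t = charFun μ (M * t) := fun t => charFun_map_mul M t
    simp only [h2, hgc]
    rw [← lintegral_map (μ := volume) (g := fun t => M * t)
      (f := fun t => ENNReal.ofReal (‖charFun μ t‖ ^ (2 * m))) (by fun_prop) hMm,
      hvol, lintegral_smul_measure, smul_eq_mul, abs_of_pos (inv_pos.2 hM)]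
  rw [h1] at hmain
  calc ∫⁻ t : ℝ, ENNReal.ofReal (‖g t‖ ^ (2 * m))
      = ENNReal.ofReal M * (ENNReal.ofReal M⁻¹ * ∫⁻ t, ENNReal.ofReal (‖g t‖ ^ (2 * m))) := by
        rw [← mul_assoc, ← ENNReal.ofReal_mul hM.le, mul_inv_cancel₀ hM.ne', ENNReal.ofReal_one,
          one_mul]
    _ ≤ ENNReal.ofReal M * ENNReal.ofReal (2 * Real.pi * (1 / √m)) := by gcongr
    _ = _ := by
        rw [← ENNReal.ofReal_mul hM.le]
        congr 1
        ring
end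

section
/- Let X satisfy E X = 0, E X² = 1, and E e^{α|X|} ≤ 2 (α > 0). Then its characteristic function f(z) = E e^{izX} satisfies |f(z)| ≤ e^{−t²/5} for all complex z = t + iy with |t| ≤ α³/8 and |y| ≤ |t|/2. -/
open MeasureTheory ProbabilityTheory

lemma aux_exp_sub (r : ℝ) (hr : 0 ≤ r) :
    Real.exp r - (1 + r + r ^ 2 / 2) ≤ r ^ 3 / 6 * Real.exp r := by
  have hd : ∀ x : ℝ, HasDerivAt (fun x : ℝ => x ^ 3 / 6 - 1 + Real.exp (-x) * (1 + x + x ^ 2 / 2))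
      (x ^ 2 / 2 * (1 - Real.exp (-x))) x := by
    intro x
    have h1 : HasDerivAt (fun x : ℝ => Real.exp (-x)) (Real.exp (-x) * (-1)) x :=
      (hasDerivAt_neg x).exp
    have h2 : HasDerivAt (fun x : ℝ => x ^ 3 / 6 - 1) (3 * x ^ 2 / 6) x := by
      simpa using ((hasDerivAt_pow 3 x).div_const 6).sub_const 1
    have h3 : HasDerivAt (fun x : ℝ => 1 + x + x ^ 2 / 2) (1 + 2 * x / 2) x := by
      have h := ((hasDerivAt_id x).const_add 1).add ((hasDerivAt_pow 2 x).div_const 2)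
      refine h.congr_deriv ?_
      norm_num
    have h4 := h2.add (h1.mul h3)
    refine h4.congr_deriv ?_
    ring
  have hm : MonotoneOn (fun x : ℝ => x ^ 3 / 6 - 1 + Real.exp (-x) * (1 + x + x ^ 2 / 2))
      (Set.Ici 0) := by
    apply monotoneOn_of_deriv_nonneg (convex_Ici 0)
    · exact fun x _ => (hd x).continuousAt.continuousWithinAt
    · exact fun x _ => (hd x).differentiableAt.differentiableWithinAt
    · intro x hx
      rw [(hd x).deriv]
      have hx' : 0 < x := by simpa using hx
      have : Real.exp (-x) ≤ 1 := Real.exp_le_one_iff.2 (by linarith)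
      have : 0 ≤ 1 - Real.exp (-x) := by linarith
      positivity
  have h := hm (Set.mem_Ici.2 le_rfl) (Set.mem_Ici.2 hr) hr
  simp only [neg_zero, Real.exp_zero] at h
  have h5 : 0 ≤ r ^ 3 / 6 - 1 + Real.exp (-r) * (1 + r + r ^ 2 / 2) := by linarith
  have h6 := mul_nonneg h5 (Real.exp_pos r).le
  have h7 : Real.exp (-r) * Real.exp r = 1 := by rw [← Real.exp_add]; simp
  linear_combination h6 + (1 + r + r ^ 2 / 2) * h7

lemma aux_cexp (w : ℂ) :
    ‖Complex.exp w - (1 + w + w ^ 2 / 2)‖ ≤ ‖w‖ ^ 3 / 6 * Real.exp ‖w‖ := by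
  have h := Complex.norm_exp_sub_sum_le_exp_norm_sub_sum w 3
  have h2 := aux_exp_sub ‖w‖ (norm_nonneg w)
  simp [Finset.sum_range_succ] at h
  linarith

lemma aux_cube (u : ℝ) (hu : 0 ≤ u) :
    u ^ 3 * Real.exp (0.14 * u) ≤ 2.12 * Real.exp u := by
  have h1 := Real.add_one_le_exp (0.86 * u / 3 - 1)
  have h2 : Real.exp (0.86 * u / 3 - 1) = Real.exp (0.86 * u / 3) / Real.exp 1 := Real.exp_sub _ _
  have he := Real.exp_one_gt_d9
  have h3 : u ≤ 1.2838 * Real.exp (0.86 * u / 3) := by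
    rw [h2, le_div_iff₀ (by positivity)] at h1
    nlinarith
  have h4 : u ^ 3 ≤ (1.2838 * Real.exp (0.86 * u / 3)) ^ 3 := by gcongr
  have h5 : (Real.exp (0.86 * u / 3)) ^ 3 = Real.exp (0.86 * u) := by
    rw [← Real.exp_nat_mul]; congr 1; push_cast; ring
  rw [mul_pow, h5] at h4
  have h6 : Real.exp u = Real.exp (0.86 * u) * Real.exp (0.14 * u) := by
    rw [← Real.exp_add]; congr 1; ring
  calc u ^ 3 * Real.exp (0.14 * u) ≤ (1.2838 ^ 3 * Real.exp (0.86 * u)) * Real.exp (0.14 * u) := by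
        gcongr
    _ = 1.2838 ^ 3 * Real.exp u := by rw [h6]; ring
    _ ≤ 2.12 * Real.exp u := by gcongr; norm_num

lemma aux_sq (u : ℝ) (hu : 0 ≤ u) : 1 + u ^ 2 ≤ Real.exp u := by
  have h := Real.sum_le_exp_of_nonneg hu 4
  simp [Finset.sum_range_succ, Nat.factorial] at h
  nlinarith [mul_nonneg hu (sq_nonneg (u - 3 / 2))]

/-- If `E X = 0`, `E X² = 1` and `E e^{α|X|} ≤ 2` (`α > 0`), then the characteristic function
`f(z) = E e^{izX}` satisfies `|f(z)| ≤ e^{−t²/5}` for all `z = t + iy` with `|t| ≤ α³/8` and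
`|y| ≤ |t|/2`. -/
theorem stmt_8 {Ω : Type*} [MeasurableSpace Ω] {P : Measure Ω} [IsProbabilityMeasure P]
    (X : Ω → ℝ) (hmeas : Measurable X) (α : ℝ) (hα : 0 < α)
    (hmean : ∫ ω, X ω ∂P = 0) (hvar : ∫ ω, (X ω) ^ 2 ∂P = 1)
    (hexp : ∫⁻ ω, ENNReal.ofReal (Real.exp (α * |X ω|)) ∂P ≤ 2)
    (f : ℂ → ℂ)
    (hf : ∀ z : ℂ, f z = ∫ ω, Complex.exp (Complex.I * z * X ω) ∂P) :
    ∀ t y : ℝ, |t| ≤ α ^ 3 / 8 → |y| ≤ |t| / 2 →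
      ‖f (t + y * Complex.I)‖ ≤ Real.exp (-t ^ 2 / 5) := by
  intro t y ht hy
  -- integrability
  have hE0 : ∀ ω, 0 ≤ Real.exp (α * |X ω|) := fun ω => (Real.exp_pos _).le
  have hEm : Measurable fun ω => Real.exp (α * |X ω|) := by fun_prop
  have hEi : Integrable (fun ω => Real.exp (α * |X ω|)) P := by
    refine ⟨hEm.aestronglyMeasurable, ?_⟩
    rw [hasFiniteIntegral_iff_ofReal (Filter.Eventually.of_forall hE0)]
    exact lt_of_le_of_lt hexp (by simp)
  have hE2 : ∫ ω, Real.exp (α * |X ω|) ∂P ≤ 2 := by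
    rw [integral_eq_lintegral_of_nonneg_ae (Filter.Eventually.of_forall hE0)
      hEm.aestronglyMeasurable]
    exact ENNReal.toReal_le_of_le_ofReal (by norm_num) (by simpa using hexp)
  have hX2 : Integrable (fun ω => X ω ^ 2) P := by
    by_contra h
    rw [integral_undef h] at hvar
    norm_num at hvar
  have hX1 : Integrable X P := by
    refine Integrable.mono' (hX2.add (integrable_const (1 : ℝ))) hmeas.aestronglyMeasurable
      (Filter.Eventually.of_forall fun ω => ?_)
    simp only [Pi.add_apply, Real.norm_eq_abs]
    nlinarith [sq_abs (X ω), sq_nonneg (|X ω| - 1), abs_nonneg (X ω)]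
  -- `α ≤ 1`
  have hα1 : α ≤ 1 := by
    have h : ∫ ω, (1 + α ^ 2 * X ω ^ 2) ∂P ≤ ∫ ω, Real.exp (α * |X ω|) ∂P := by
      refine integral_mono ((integrable_const _).add (hX2.const_mul _)) hEi fun ω => ?_
      have := aux_sq (α * |X ω|) (by positivity)
      rwa [mul_pow, sq_abs] at this
    rw [integral_add (integrable_const _) (hX2.const_mul _), integral_const_mul, hvar] at h
    simp at h
    nlinarith
  set z : ℂ := t + y * Complex.I with hz
  have hzn : ‖z‖ ^ 2 = t ^ 2 + y ^ 2 := by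
    rw [Complex.sq_norm, Complex.normSq_apply]; simp [hz]; ring
  have hy2 : y ^ 2 ≤ t ^ 2 / 4 := by
    have := pow_le_pow_left₀ (abs_nonneg y) hy 2
    rw [div_pow, sq_abs, sq_abs] at this
    linarith
  have hzt : ‖z‖ ≤ 1.12 * |t| := by
    refine abs_le_of_sq_le_sq' ?_ (by positivity) |>.2
    rw [hzn, mul_pow, sq_abs]
    nlinarith [sq_nonneg t]
  have hα3 : α ^ 3 ≤ α := by nlinarith [mul_pos hα hα]
  have hzα : ‖z‖ ≤ 0.14 * α := by linarith
  have ht2 : t ^ 2 ≤ 1 / 64 := by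
    have h1 : |t| ≤ 1 / 8 := by linarith
    have := pow_le_pow_left₀ (abs_nonneg t) h1 2
    rw [sq_abs] at this
    linarith
  -- pointwise bound
  have hpt : ∀ ω, ‖Complex.exp (Complex.I * z * X ω) - (1 + Complex.I * z * X ω
      + (Complex.I * z * X ω) ^ 2 / 2)‖ ≤ ‖z‖ ^ 3 / 6 * (2.12 / α ^ 3) * Real.exp (α * |X ω|) := by
    intro ω
    refine (aux_cexp _).trans ?_
    have hn : ‖Complex.I * z * X ω‖ = ‖z‖ * |X ω| := by simp
    rw [hn]
    have h1 := aux_cube (α * |X ω|) (by positivity)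
    have h2 : Real.exp (‖z‖ * |X ω|) ≤ Real.exp (0.14 * (α * |X ω|)) := by
      rw [← mul_assoc]; gcongr
    calc (‖z‖ * |X ω|) ^ 3 / 6 * Real.exp (‖z‖ * |X ω|)
        ≤ (‖z‖ * |X ω|) ^ 3 / 6 * Real.exp (0.14 * (α * |X ω|)) := by gcongr
      _ = ‖z‖ ^ 3 / 6 / α ^ 3 * ((α * |X ω|) ^ 3 * Real.exp (0.14 * (α * |X ω|))) := by
          field_simp
      _ ≤ ‖z‖ ^ 3 / 6 / α ^ 3 * (2.12 * Real.exp (α * |X ω|)) := by gcongr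
      _ = _ := by ring
  have hXc : Integrable (fun ω => Complex.I * z * (X ω : ℂ)) P := hX1.ofReal.const_mul _
  have hX2c : Integrable (fun ω => (Complex.I * z * (X ω : ℂ)) ^ 2 / 2) P := by
    have : (fun ω => (Complex.I * z * (X ω : ℂ)) ^ 2 / 2)
        = fun ω => (Complex.I * z) ^ 2 / 2 * ((X ω ^ 2 : ℝ) : ℂ) := by
      ext ω; push_cast; ring
    rw [this]
    exact hX2.ofReal.const_mul _
  have hQ : Integrable (fun ω => 1 + Complex.I * z * (X ω : ℂ)
      + (Complex.I * z * (X ω : ℂ)) ^ 2 / 2) P := ((integrable_const _).add hXc).add hX2c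
  have hQv : ∫ ω, (1 + Complex.I * z * (X ω : ℂ) + (Complex.I * z * (X ω : ℂ)) ^ 2 / 2) ∂P
      = 1 - z ^ 2 / 2 := by
    have h1 : ∫ ω, Complex.I * z * (X ω : ℂ) ∂P = 0 := by
      rw [integral_const_mul, integral_complex_ofReal, hmean]; simp
    have h2 : ∫ ω, (Complex.I * z * (X ω : ℂ)) ^ 2 / 2 ∂P = - z ^ 2 / 2 := by
      have : (fun ω => (Complex.I * z * (X ω : ℂ)) ^ 2 / 2)
          = fun ω => (Complex.I * z) ^ 2 / 2 * ((X ω ^ 2 : ℝ) : ℂ) := by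
        ext ω; push_cast; ring
      rw [this, integral_const_mul, integral_complex_ofReal, hvar, mul_pow, Complex.I_sq]
      simp
    have h3 : Integrable (fun ω => 1 + Complex.I * z * (X ω : ℂ)) P :=
      (integrable_const _).add hXc
    rw [integral_add h3 hX2c, integral_add (integrable_const _) hXc,
      h1, h2]
    simp
    ring
  have hD : Integrable (fun ω => Complex.exp (Complex.I * z * X ω) - (1 + Complex.I * z * X ω
      + (Complex.I * z * X ω) ^ 2 / 2)) P := by
    refine Integrable.mono' (hEi.const_mul (‖z‖ ^ 3 / 6 * (2.12 / α ^ 3))) ?_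
      (Filter.Eventually.of_forall hpt)
    apply Measurable.aestronglyMeasurable
    fun_prop
  have hR : ‖∫ ω, (Complex.exp (Complex.I * z * X ω) - (1 + Complex.I * z * X ω
      + (Complex.I * z * X ω) ^ 2 / 2)) ∂P‖ ≤ ‖z‖ ^ 3 / 6 * (2.12 / α ^ 3) * 2 := by
    refine (norm_integral_le_of_norm_le (hEi.const_mul (‖z‖ ^ 3 / 6 * (2.12 / α ^ 3)))
      (Filter.Eventually.of_forall hpt)).trans ?_
    rw [integral_const_mul]
    gcongr
  have hfz : f z = (1 - z ^ 2 / 2) + ∫ ω, (Complex.exp (Complex.I * z * X ω)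
      - (1 + Complex.I * z * X ω + (Complex.I * z * X ω) ^ 2 / 2)) ∂P := by
    rw [hf, ← hQv, ← integral_add hQ hD]
    congr 1
    ext ω
    ring
  have hR2 : ‖z‖ ^ 3 / 6 * (2.12 / α ^ 3) * 2 ≤ 0.125 * t ^ 2 := by
    have h1 : ‖z‖ ^ 3 ≤ (1.12 * |t|) ^ 3 := by gcongr
    have h2 : (1.12 * |t|) ^ 3 ≤ 1.12 ^ 3 * t ^ 2 * (α ^ 3 / 8) := by
      calc (1.12 * |t|) ^ 3 = 1.12 ^ 3 * |t| ^ 2 * |t| := by ring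
        _ = 1.12 ^ 3 * t ^ 2 * |t| := by rw [sq_abs]
        _ ≤ _ := by gcongr
    calc ‖z‖ ^ 3 / 6 * (2.12 / α ^ 3) * 2
        ≤ (1.12 ^ 3 * t ^ 2 * (α ^ 3 / 8)) / 6 * (2.12 / α ^ 3) * 2 := by
          gcongr; exact h1.trans h2
      _ = (1.12 ^ 3 / 8 / 6 * 2.12 * 2) * t ^ 2 := by field_simp
      _ ≤ 0.125 * t ^ 2 := by gcongr; norm_num
  have hM : ‖1 - z ^ 2 / 2‖ ≤ 1 - 0.37 * t ^ 2 := by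
    refine abs_le_of_sq_le_sq' ?_ (by nlinarith) |>.2
    have hre : (1 - z ^ 2 / 2).re = 1 - (t ^ 2 - y ^ 2) / 2 := by
      simp [hz, pow_two]
    have him : (1 - z ^ 2 / 2).im = - (t * y) := by
      simp [hz, pow_two]; ring
    rw [Complex.sq_norm, Complex.normSq_apply, hre, him]
    nlinarith [sq_nonneg t, sq_nonneg y, mul_le_mul_of_nonneg_left ht2 (sq_nonneg t),
      mul_le_mul_of_nonneg_left hy2 (sq_nonneg t), mul_le_mul_of_nonneg_left hy2 (sq_nonneg y)]
  have hfin := Real.add_one_le_exp (-t ^ 2 / 5)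
  rw [hfz]
  refine (norm_add_le _ _).trans ?_
  nlinarith [sq_nonneg t]
end

section
/- Let X satisfy E X = 0, E X² = 1, E e^{α|X|} ≤ 2 (α > 0), and let K(z) = log E e^{zX}. Then for every complex τ with |τ| ≤ α³/32, the saddle-point equation K'(z) = τ has a unique solution z₀(τ) in the disc |z| ≤ α³/16; the map τ ↦ z₀(τ) is analytic and injective on |τ| ≤ α³/32, satisfies z₀(0) = 0, z₀'(0) = 1, and |z₀(τ)| ≤ 2|τ|. -/
open MeasureTheory ProbabilityTheory

/-- Mean value inequality from the centre of a ball. -/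
lemma saddle_mvt {R C : ℝ} {f f' : ℂ → ℂ}
    (hf : ∀ z, ‖z‖ < R → HasDerivAt f (f' z) z) (hb : ∀ z, ‖z‖ < R → ‖f' z‖ ≤ C)
    {z w : ℂ} (hz : ‖z‖ < R) (hw : ‖w‖ < R) : ‖f z - f w‖ ≤ C * ‖z - w‖ := by
  refine Convex.norm_image_sub_le_of_norm_hasDerivWithin_le (s := Metric.ball (0 : ℂ) R) (f' := f')
    (fun x hx => (hf x (by simpa using hx)).hasDerivWithinAt)
    (fun x hx => hb x (by simpa using hx)) (convex_ball _ _) (by simpa using hw) (by simpa using hz)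

/-- Quantitative holomorphic inverse function theorem. -/
lemma saddle_inverse {R : ℝ} (hR : 0 < R) {G G' : ℂ → ℂ}
    (hG : ∀ z, ‖z‖ < R → HasDerivAt G (G' z) z) (hb : ∀ z, ‖z‖ < R → ‖G' z - 1‖ ≤ 1 / 2)
    (h0 : G 0 = 0) (h1 : G' 0 = 1) :
    ∃ z₀ : ℂ → ℂ, DifferentiableOn ℂ z₀ (Metric.ball 0 (R / 2)) ∧ z₀ 0 = 0 ∧ deriv z₀ 0 = 1 ∧
      ∀ τ : ℂ, ‖τ‖ < R / 2 → ‖z₀ τ‖ < R ∧ G (z₀ τ) = τ ∧ ‖z₀ τ‖ ≤ 2 * ‖τ‖ ∧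
        ∀ z, ‖z‖ < R → G z = τ → z = z₀ τ := by
  have hF : ∀ z w : ℂ, ‖z‖ < R → ‖w‖ < R → ‖(G z - z) - (G w - w)‖ ≤ 1 / 2 * ‖z - w‖ := by
    intro z w hz hw
    exact saddle_mvt (f := fun z => G z - z) (f' := fun z => G' z - 1)
      (fun z hz => (hG z hz).sub (hasDerivAt_id z)) hb hz hw
  have hinv : ∀ z w : ℂ, ‖z‖ < R → ‖w‖ < R → ‖z - w‖ ≤ 2 * ‖G z - G w‖ := by
    intro z w hz hw
    have h := hF z w hz hw
    have h2 : ‖z - w‖ ≤ ‖G z - G w‖ + ‖(G z - z) - (G w - w)‖ := by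
      have : z - w = (G z - G w) - ((G z - z) - (G w - w)) := by ring
      rw [this]
      exact norm_sub_le _ _
    linarith
  have hex : ∀ τ : ℂ, ∃ z : ℂ, ‖τ‖ < R / 2 → ‖z‖ ≤ 2 * ‖τ‖ ∧ G z = τ := by
    intro τ
    by_cases hτ : ‖τ‖ < R / 2
    swap
    · exact ⟨0, fun h => absurd h hτ⟩
    have happ : ApproximatesLinearOn G (ContinuousLinearMap.id ℂ ℂ) (Metric.ball 0 R)
        (1 / 2 : NNReal) := by
      intro z hz w hw
      have h := hF z w (by simpa using hz) (by simpa using hw)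
      have e : G z - G w - (ContinuousLinearMap.id ℂ ℂ) (z - w) = (G z - z) - (G w - w) := by
        simp; ring
      rw [e]
      simpa using h
    have hs := happ.surjOn_closedBall_of_nonlinearRightInverse
      (f'symm := ⟨id, 1, by intro y; simp, by intro y; simp⟩) (ε := 2 * ‖τ‖) (b := 0)
      (by positivity) (Metric.closedBall_subset_ball (by linarith))
    obtain ⟨z, hz, hz'⟩ := hs (show τ ∈ _ by
      simp [h0]; ring_nf; exact le_refl _)
    exact ⟨z, fun _ => ⟨by simpa using hz, hz'⟩⟩
  choose z₀ hz₀ using hex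
  have hlt : ∀ τ : ℂ, ‖τ‖ < R / 2 → ‖z₀ τ‖ < R := fun τ h => by
    have := (hz₀ τ h).1
    linarith
  have hd : ∀ τ : ℂ, ‖τ‖ < R / 2 → HasDerivAt z₀ (G' (z₀ τ))⁻¹ τ := by
    intro τ hτ
    have hev : ∀ᶠ y in nhds τ, ‖y‖ < R / 2 :=
      (isOpen_lt continuous_norm continuous_const).mem_nhds hτ
    refine HasDerivAt.of_local_left_inverse ?_ (hG _ (hlt τ hτ)) ?_
      (hev.mono fun y hy => (hz₀ y hy).2)
    · rw [ContinuousAt, tendsto_iff_norm_sub_tendsto_zero]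
      refine squeeze_zero' (g := fun y => 2 * ‖y - τ‖) (Filter.Eventually.of_forall fun _ => norm_nonneg _) ?_ ?_
      · refine hev.mono fun y hy => ?_
        have := hinv _ _ (hlt y hy) (hlt τ hτ)
        rwa [(hz₀ y hy).2, (hz₀ τ hτ).2] at this
      · have : Continuous fun y : ℂ => 2 * ‖y - τ‖ := by fun_prop
        simpa using this.tendsto τ
    · intro h
      have := hb _ (hlt τ hτ)
      rw [h] at this
      norm_num at this
  have hz00 : z₀ 0 = 0 := by
    have := (hz₀ 0 (by simpa using hR)).1
    simpa using this
  refine ⟨z₀, fun τ hτ => (hd τ (by simpa using hτ)).differentiableAt.differentiableWithinAt,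
    hz00, ?_, fun τ hτ => ⟨hlt τ hτ, (hz₀ τ hτ).2, (hz₀ τ hτ).1, fun z hz hGz => ?_⟩⟩
  · have := (hd 0 (by simpa using hR)).deriv
    rw [this, hz00, h1, inv_one]
  · have := hinv z (z₀ τ) hz (hlt τ hτ)
    rw [hGz, (hz₀ τ hτ).2] at this
    simpa [sub_eq_zero] using this

lemma saddle_real1 {x : ℝ} (hx : 0 ≤ x) : 1 + x ^ 2 ≤ Real.exp x := by
  have h := Real.sum_le_exp_of_nonneg hx 4
  simp [Finset.sum_range_succ, Nat.factorial] at h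
  nlinarith [mul_nonneg hx (sq_nonneg (x - 3 / 2))]

lemma saddle_real2 {x : ℝ} (hx : 0 ≤ x) : x ^ 3 * Real.exp (x / 12) ≤ 2 * Real.exp x := by
  have h1 : Real.exp x = Real.exp (11 * x / 36) ^ 3 * Real.exp (x / 12) := by
    rw [← Real.exp_nat_mul, ← Real.exp_add]; congr 1; push_cast; ring
  have h2 : 0.83 * x ≤ Real.exp (11 * x / 36) := by
    have h3 := Real.add_one_le_exp (11 * x / 36 - 1)
    have h4 := Real.exp_one_gt_d9
    have h5 : Real.exp (11 * x / 36) = Real.exp (11 * x / 36 - 1) * Real.exp 1 := by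
      rw [← Real.exp_add]; congr 1; ring
    rw [h5]
    nlinarith [Real.exp_pos (11 * x / 36 - 1)]
  have h6 : (0.83 * x) ^ 3 ≤ Real.exp (11 * x / 36) ^ 3 := by gcongr
  rw [h1, ← mul_assoc]
  gcongr
  have : 0 ≤ x ^ 3 := by positivity
  norm_num [mul_pow] at h6
  linarith

/-- Saddle point: if `E X = 0`, `E X² = 1`, `E e^{α|X|} ≤ 2`, and `K(z) = log E e^{zX}`,
then there is a map `z₀`, analytic and injective on the disc `|τ| ≤ α³/32`, with
`z₀ 0 = 0`, `z₀' 0 = 1`, such that for each `|τ| ≤ α³/32` the point `z₀ τ` is the unique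
solution of `K'(z) = τ` in the disc `|z| ≤ α³/16`, and `|z₀ τ| ≤ 2|τ|`. -/
theorem stmt_13 {Ω : Type*} [MeasurableSpace Ω] {P : Measure Ω} [IsProbabilityMeasure P]
    (X : Ω → ℝ) (hmeas : Measurable X) (α : ℝ) (hα : 0 < α)
    (hmean : ∫ ω, X ω ∂P = 0) (hvar : ∫ ω, (X ω) ^ 2 ∂P = 1)
    (hexp : ∫⁻ ω, ENNReal.ofReal (Real.exp (α * |X ω|)) ∂P ≤ 2)
    (K : ℂ → ℂ)
    (hK : ∀ z : ℂ, K z = Complex.log (∫ ω, Complex.exp (z * X ω) ∂P)) :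
    ∃ z₀ : ℂ → ℂ,
      AnalyticOnNhd ℂ z₀ {τ : ℂ | ‖τ‖ ≤ α ^ 3 / 32} ∧
      Set.InjOn z₀ {τ : ℂ | ‖τ‖ ≤ α ^ 3 / 32} ∧
      z₀ 0 = 0 ∧ deriv z₀ 0 = 1 ∧
      ∀ τ : ℂ, ‖τ‖ ≤ α ^ 3 / 32 →
        ‖z₀ τ‖ ≤ α ^ 3 / 16 ∧ deriv K (z₀ τ) = τ ∧ ‖z₀ τ‖ ≤ 2 * ‖τ‖ ∧
        (∀ z : ℂ, ‖z‖ ≤ α ^ 3 / 16 → deriv K z = τ → z = z₀ τ) := by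
  classical
  -- integrability of the exponential moment
  have hIexp : Integrable (fun ω => Real.exp (α * |X ω|)) P := by
    refine ⟨by fun_prop, ?_⟩
    rw [hasFiniteIntegral_iff_ofReal (Filter.Eventually.of_forall fun _ => (Real.exp_pos _).le)]
    exact lt_of_le_of_lt hexp (by simp)
  have hE2 : ∫ ω, Real.exp (α * |X ω|) ∂P ≤ 2 := by
    rw [integral_eq_lintegral_of_nonneg_ae
      (Filter.Eventually.of_forall fun _ => (Real.exp_pos _).le) (by fun_prop)]
    have := ENNReal.toReal_mono (by simp) hexp
    simpa using this
  have hsub : Set.Ioo (-α) α ⊆ interior (integrableExpSet X P) := by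
    refine interior_maximal ?_ isOpen_Ioo
    intro t ht
    refine Integrable.mono' hIexp (by fun_prop) (Filter.Eventually.of_forall fun ω => ?_)
    rw [Real.norm_eq_abs, Real.abs_exp]
    refine Real.exp_le_exp.2 ?_
    refine (le_abs_self _).trans ?_
    rw [abs_mul]
    gcongr
    exact (abs_lt.2 ht).le
  have h0mem : (0 : ℝ) ∈ interior (integrableExpSet X P) := hsub ⟨by linarith, hα⟩
  have hI2 : Integrable (fun ω => X ω ^ 2) P :=
    integrable_pow_of_mem_interior_integrableExpSet h0mem 2
  have hα1 : α ≤ 1 := by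
    have h : ∫ ω, (1 + α ^ 2 * X ω ^ 2) ∂P ≤ ∫ ω, Real.exp (α * |X ω|) ∂P := by
      refine integral_mono ((integrable_const _).add (hI2.const_mul _)) hIexp fun ω => ?_
      have := saddle_real1 (x := α * |X ω|) (by positivity)
      simpa [mul_pow] using this
    rw [integral_add (integrable_const _) (hI2.const_mul _), integral_const_mul, hvar] at h
    simp at h
    nlinarith
  set R : ℝ := α ^ 3 / 12 with hRdef
  have hR : 0 < R := by positivity
  have hα3 : α ^ 3 ≤ α := by
    have : α ^ 2 ≤ 1 := by nlinarith
    nlinarith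
  have hR1 : R ≤ α / 12 := by rw [hRdef]; linarith
  have hre : ∀ z : ℂ, ‖z‖ < R → z.re ∈ interior (integrableExpSet X P) := by
    intro z hz
    refine hsub (abs_lt.1 ?_)
    have := Complex.abs_re_le_norm z
    linarith
  -- moment functions
  let D : ℕ → ℂ → ℂ := fun n z => ∫ ω, (X ω : ℂ) ^ n * Complex.exp (z * X ω) ∂P
  have hD : ∀ n z, ‖z‖ < R → HasDerivAt (D n) (D (n + 1) z) z := fun n z hz =>
    hasDerivAt_integral_pow_mul_exp (hre z hz) n
  have hD00 : D 0 0 = 1 := by simp [D]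
  have hD10 : D 1 0 = 0 := by
    simp only [D, pow_one, zero_mul, Complex.exp_zero, mul_one]
    rw [integral_complex_ofReal, hmean]; simp
  have hD20 : D 2 0 = 1 := by
    simp only [D, zero_mul, Complex.exp_zero, mul_one, ← Complex.ofReal_pow]
    rw [integral_complex_ofReal, hvar]; simp
  have hD3 : ∀ z, ‖z‖ < R → ‖D 3 z‖ ≤ 4 / α ^ 3 := by
    intro z hz
    have h : ‖D 3 z‖ ≤ ∫ ω, 2 / α ^ 3 * Real.exp (α * |X ω|) ∂P := by
      refine norm_integral_le_of_norm_le (hIexp.const_mul _)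
        (Filter.Eventually.of_forall fun ω => ?_)
      have h2 := saddle_real2 (x := α * |X ω|) (by positivity)
      have h3 : ‖Complex.exp (z * X ω)‖ ≤ Real.exp (α * |X ω| / 12) := by
        rw [Complex.norm_exp]
        gcongr
        refine (Complex.re_le_norm _).trans ?_
        rw [norm_mul, Complex.norm_real, Real.norm_eq_abs]
        nlinarith [abs_nonneg (X ω)]
      rw [norm_mul, norm_pow, Complex.norm_real, Real.norm_eq_abs, div_mul_eq_mul_div,
        le_div_iff₀ (by positivity)]
      calc |X ω| ^ 3 * ‖Complex.exp (z * X ω)‖ * α ^ 3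
          ≤ |X ω| ^ 3 * Real.exp (α * |X ω| / 12) * α ^ 3 := by gcongr
        _ = (α * |X ω|) ^ 3 * Real.exp (α * |X ω| / 12) := by ring
        _ ≤ _ := h2
    rw [integral_const_mul] at h
    refine h.trans ?_
    calc 2 / α ^ 3 * ∫ ω, Real.exp (α * |X ω|) ∂P ≤ 2 / α ^ 3 * 2 := by gcongr
      _ = 4 / α ^ 3 := by ring
  have hz0 : ‖(0 : ℂ)‖ < R := by simpa using hR
  have hD2 : ∀ z, ‖z‖ < R → ‖D 2 z - 1‖ ≤ 1 / 3 := by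
    intro z hz
    have h := saddle_mvt (hD 2) hD3 hz hz0
    rw [hD20, sub_zero] at h
    refine h.trans ?_
    calc 4 / α ^ 3 * ‖z‖ ≤ 4 / α ^ 3 * R := by gcongr
      _ = 1 / 3 := by rw [hRdef]; field_simp; norm_num
  have hD2' : ∀ z, ‖z‖ < R → ‖D 2 z‖ ≤ 4 / 3 := by
    intro z hz
    have h := norm_add_le (D 2 z - 1) 1
    have h' := hD2 z hz
    simp only [sub_add_cancel, norm_one] at h
    linarith
  have hD1 : ∀ z, ‖z‖ < R → ‖D 1 z‖ ≤ 1 / 9 := by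
    intro z hz
    have h := saddle_mvt (hD 1) hD2' hz hz0
    rw [hD10, sub_zero, sub_zero] at h
    linarith
  have hD0 : ∀ z, ‖z‖ < R → ‖D 0 z - 1‖ ≤ 1 / 108 := by
    intro z hz
    have h := saddle_mvt (hD 0) hD1 hz hz0
    rw [hD00, sub_zero] at h
    linarith
  have hD0n : ∀ z, ‖z‖ < R → 107 / 108 ≤ ‖D 0 z‖ := by
    intro z hz
    have h := norm_sub_norm_le (1 : ℂ) (D 0 z)
    rw [norm_sub_rev, norm_one] at h
    linarith [hD0 z hz]
  have hD0ne : ∀ z, ‖z‖ < R → D 0 z ≠ 0 := by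
    intro z hz h
    have := hD0n z hz
    rw [h, norm_zero] at this
    norm_num at this
  -- derivative of `K`
  have hKD : K = fun z => Complex.log (D 0 z) := by
    funext z; rw [hK]; simp [D]
  have hdK : ∀ z, ‖z‖ < R → deriv K z = D 1 z / D 0 z := by
    intro z hz
    rw [hKD]
    refine ((hD 0 z hz).clog ?_).deriv
    have h1 := hD0 z hz
    have h2 := (Complex.abs_re_le_norm (D 0 z - 1)).trans h1
    refine Or.inl ?_
    have h3 := (abs_le.1 h2).1
    simp at h3
    linarith
  obtain ⟨z₀, hdiff, hz00, hder, hsol⟩ := saddle_inverse hR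
    (G := fun z => D 1 z / D 0 z)
    (G' := fun z => (D 2 z * D 0 z - D 1 z * D 1 z) / D 0 z ^ 2)
    (fun z hz => (hD 1 z hz).div (hD 0 z hz) (hD0ne z hz))
    (by
      intro z hz
      have hn := hD0n z hz
      have hne := hD0ne z hz
      have e : (D 2 z * D 0 z - D 1 z * D 1 z) / D 0 z ^ 2 - 1
          = ((D 2 z - 1) - (D 0 z - 1)) / D 0 z - (D 1 z / D 0 z) ^ 2 := by
        field_simp
        ring
      rw [e]
      have ha : ‖((D 2 z - 1) - (D 0 z - 1)) / D 0 z‖ ≤ (1 / 3 + 1 / 108) / (107 / 108) := by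
        rw [norm_div]
        gcongr
        exact (norm_sub_le _ _).trans (add_le_add (hD2 z hz) (hD0 z hz))
      have hb : ‖(D 1 z / D 0 z) ^ 2‖ ≤ ((1 / 9) / (107 / 108)) ^ 2 := by
        rw [norm_pow, norm_div]
        gcongr
        exact hD1 z hz
      refine (norm_sub_le _ _).trans ((add_le_add ha hb).trans ?_)
      norm_num)
    (by simp [hD10]) (by simp [hD10, hD20, hD00])
  have hα3p : 0 < α ^ 3 := by positivity
  have hlt : ∀ τ : ℂ, ‖τ‖ ≤ α ^ 3 / 32 → ‖τ‖ < R / 2 := by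
    intro τ hτ
    rw [hRdef]; linarith
  refine ⟨z₀, ?_, ?_, hz00, hder, ?_⟩
  · refine (hdiff.analyticOnNhd Metric.isOpen_ball).mono fun τ hτ => ?_
    simpa using hlt τ hτ
  · intro τ hτ σ hσ h
    rw [← (hsol τ (hlt τ hτ)).2.1, ← (hsol σ (hlt σ hσ)).2.1, h]
  · intro τ hτ
    obtain ⟨h1, h2, h3, h4⟩ := hsol τ (hlt τ hτ)
    refine ⟨by linarith, by rw [hdK _ h1]; exact h2, h3, fun z hz hz' => ?_⟩
    have hzR : ‖z‖ < R := by rw [hRdef]; linarith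
    exact h4 z hzR (by rw [← hdK z hzR]; exact hz')
end
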